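/- (Borg–Levinson uniqueness theorem, continuous-potential version.) Let Q, q : ℝ → ℝ be continuous on [0,1] and let α, β, γ ∈ ℝ with sin(β − γ) ≠ 0. For a continuous potential p and angles (α, δ), call λ ∈ ℝ an eigenvalue of the problem (p; α, δ) if there exists a twice continuously differentiable u : ℝ → ℝ, not identically zero on [0,1], with −u'' + p u = λ u on [0,1], u(0)cos α + u'(0)sin α = 0, and u(1)cos δ + u'(1)sin δ = 0. Suppose that for every λ ∈ ℝ, λ is an eigenvalue of (Q; α, β) if and only if it is an eigenvalue of (q; α, β), and λ is an eigenvalue of (Q; α, γ) if and only if it is an eigenvalue of (q; α, γ). Then Q(x) = q(x) for all x ∈ [0,1]. -/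

import Mathlib

/-!
Write `μ = -λ`, and let `u(x, μ)` be the solution of `u'' = (p + μ) u` with
`(u(0), u'(0)) = (sin α, -cos α)`. The eigenvalues of `(p; α, δ)` are the negatives of the real zeros
of `ω_δ(μ) = u(1, μ) cos δ + u'(1, μ) sin δ`, an entire function of order at most `1/2`
(`exists_family`).

*From spectra to boundary values* (`boundary_eq`). Let `ω` and `ω~` belong to the two potentials. The
lower bound `sl_lower`, a quantitative form of Green's identity, shows that the zeros of `ω` are real
and simple, so equality of the spectra makes `ω~ / ω` entire, and together with the maximum principle
it shows that the quotient again has order at most `1/2`. By the asymptotics `sl_ray`, the quotient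
tends to `1` along `μ = ± 2 i r ^ 2`; by Phragmén–Lindelöf and Liouville it is identically `1`
(`eq_of_ordHalf_of_tendsto`, `eq_of_quotient`). Two angles with `sin (β - γ) ≠ 0` then determine
`u(1, μ)` and `u'(1, μ)` for all `μ`.

*From boundary values to the potential* (`potential_eq`). Let `c, s` be the fundamental system of the
first equation normalised at the endpoint `1`, and `d, t` that of the second. Since
`u = u(1) c - u'(1) s`, and likewise for the second potential with the same coefficients, the function
`c t - d s` equals `(u t - u~ s) / u(1)`, which is `O(1 / r)` along `μ = ± 2 i r ^ 2`. Being entire of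
order at most `1/2` in `μ`, it vanishes identically. Differentiating `c t = d s` in `x` and using the
Wronskian identities gives `s ^ 2 = t ^ 2`, and then equality of the potentials wherever `s ≠ 0`
(`eq_of_local`), which can be arranged at each interior point by the choice of `μ`.
-/

/-- `λ` is an eigenvalue of the Sturm–Liouville problem with continuous potential `p`
and separated boundary conditions given by angles `α` (at `0`) and `δ` (at `1`): there
is a twice continuously differentiable `u`, not identically zero on `[0,1]`, with
`−u'' + p u = λ u` on `[0,1]`, `u(0)cos α + u'(0)sin α = 0` and `u(1)cos δ + u'(1)sin δ = 0`. -/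
def IsSLEigenvalue (p : ℝ → ℝ) (α δ : ℝ) (lam : ℝ) : Prop :=
  ∃ u u' u'' : ℝ → ℝ,
    (∀ x ∈ Set.Icc (0:ℝ) 1, HasDerivAt u (u' x) x ∧ HasDerivAt u' (u'' x) x) ∧
    ContinuousOn u'' (Set.Icc (0:ℝ) 1) ∧
    (∃ x ∈ Set.Icc (0:ℝ) 1, u x ≠ 0) ∧
    (∀ x ∈ Set.Icc (0:ℝ) 1, -u'' x + p x * u x = lam * u x) ∧
    u 0 * Real.cos α + u' 0 * Real.sin α = 0 ∧
    u 1 * Real.cos δ + u' 1 * Real.sin δ = 0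

open Set Filter Topology

/-! ### Existence of solutions -/

/-- The factorial bound on Picard iterates: if `F (n + 1)` vanishes at `0` and its derivative is at
most `K ‖F n‖`, then `‖F n x‖ ≤ C (K x) ^ n / n!`. -/
theorem picard_bound {E : Type*} [NormedAddCommGroup E] [NormedSpace ℝ E]
    (F F' : ℕ → ℝ → E) (K C : ℝ) (hK : 0 ≤ K)
    (hF : ∀ n x, HasDerivAt (F (n + 1)) (F' n x) x)
    (hF' : ∀ n x, ‖F' n x‖ ≤ K * ‖F n x‖) (h0 : ∀ n, F (n + 1) 0 = 0)
    (hC : ∀ x, ‖F 0 x‖ ≤ C) (n : ℕ) :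
    ∀ x, 0 ≤ x → ‖F n x‖ ≤ C * ((K * x) ^ n / n.factorial) := by
  induction n with
  | zero => intro x _; simpa using hC x
  | succ n ih =>
    intro x hx
    refine image_norm_le_of_norm_deriv_right_le_deriv_boundary
      (f := F (n + 1)) (f' := F' n) (a := 0) (b := x)
      (B := fun x => C * ((K * x) ^ (n + 1) / (n + 1).factorial))
      (B' := fun x => K * (C * ((K * x) ^ n / n.factorial)))
      (fun y _ => (hF n y).continuousAt.continuousWithinAt)
      (fun y _ => (hF n y).hasDerivWithinAt) (by simp [h0]) ?_ ?_ ⟨hx, le_rfl⟩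
    · intro y
      have h1 : HasDerivAt (fun y => K * y) K y := by
        simpa using (hasDerivAt_id y).const_mul K
      have := ((h1.pow (n + 1)).div_const ((n + 1).factorial : ℝ)).const_mul C
      refine this.congr_deriv ?_
      have : (n.factorial : ℝ) ≠ 0 := by positivity
      rw [Nat.factorial_succ]
      push_cast
      field_simp
    · intro y hy
      exact (hF' n y).trans (mul_le_mul_of_nonneg_left (ih y hy.1) hK)

/-- Global solvability of a linear equation `y' = A(x) y` on `[0,1]` with bounded continuous
coefficients, as the sum of the Picard series. The derivatives are two-sided also at `0` and `1`. -/
theorem exists_linear_ode {E : Type*} [NormedAddCommGroup E] [NormedSpace ℝ E] [CompleteSpace E]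
    (A : ℝ → E →L[ℝ] E) (hA : Continuous A) (K : ℝ) (hK : ∀ x, ‖A x‖ ≤ K) (y0 : E) :
    ∃ y : ℝ → E, y 0 = y0 ∧ ∀ x ∈ Icc (0 : ℝ) 1, HasDerivAt y (A x (y x)) x := by
  have hK0 : 0 ≤ K := (norm_nonneg _).trans (hK 0)
  let F : ℕ → ℝ → E := fun n => Nat.rec (fun _ => y0) (fun _ f x => ∫ t in (0:ℝ)..x, A t (f t)) n
  have hFs : ∀ n x, F (n + 1) x = ∫ t in (0:ℝ)..x, A t (F n t) := fun n x => rfl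
  have hF0 : ∀ x, F 0 x = y0 := fun x => rfl
  have hd : ∀ n, Continuous (F n) → ∀ x, HasDerivAt (F (n + 1)) (A x (F n x)) x := by
    intro n hc x
    exact ((hA.clm_apply hc).integral_hasStrictDerivAt 0 x).hasDerivAt
  have hcont : ∀ n, Continuous (F n) := by
    intro n
    induction n with
    | zero => exact continuous_const
    | succ n ih => exact continuous_iff_continuousAt.2 fun x => (hd n ih x).continuousAt
  have hF : ∀ n x, HasDerivAt (F (n + 1)) (A x (F n x)) x := fun n => hd n (hcont n)
  have hle : ∀ n x, ‖A x (F n x)‖ ≤ K * ‖F n x‖ := fun n x => (A x).le_of_opNorm_le (hK x) _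
  have hz : ∀ n, F (n + 1) 0 = 0 := fun n => by simp [hFs]
  have hb : ∀ n x, ‖F n x‖ ≤ ‖y0‖ * ((K * |x|) ^ n / n.factorial) := by
    intro n x
    rcases le_total 0 x with hx | hx
    · rw [abs_of_nonneg hx]
      exact picard_bound F (fun n x => A x (F n x)) K _ hK0 hF hle hz (fun _ => le_rfl) n x hx
    · rw [abs_of_nonpos hx]
      have := picard_bound (fun n x => F n (-x)) (fun n x => -A (-x) (F n (-x))) K ‖y0‖ hK0
        (fun n x => by simpa [Function.comp_def] using (hF n (-x)).scomp x (hasDerivAt_neg x))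
        (fun n x => by simpa using hle n (-x)) (by simpa using hz) (fun _ => le_rfl) n (-x)
        (by linarith)
      simpa using this
  let g' : ℕ → ℝ → E := fun n x => Nat.casesOn n 0 (fun n => A x (F n x))
  let U : ℕ → ℝ := fun n => Nat.casesOn n 0 (fun n => K * (‖y0‖ * ((K * 2) ^ n / n.factorial)))
  have hU : Summable U := by
    rw [← summable_nat_add_iff 1]
    exact ((Real.summable_pow_div_factorial (K * 2)).mul_left _).mul_left _
  have hsum : ∀ x, Summable fun n => F n x := fun x =>
    Summable.of_norm_bounded ((Real.summable_pow_div_factorial (K * |x|)).mul_left _)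
      (fun n => hb n x)
  refine ⟨fun x => ∑' n, F n x, ?_, ?_⟩
  · show ∑' n, F n 0 = y0
    rw [(hsum 0).tsum_eq_zero_add]
    simp [hz, hF0]
  · intro x hx
    have hx2 : x ∈ Ioo (-2 : ℝ) 2 := ⟨by linarith [hx.1], by linarith [hx.2]⟩
    have := hasDerivAt_tsum_of_isPreconnected (g := F) (g' := g') (y₀ := x) (y := x) hU
      (isOpen_Ioo (a := (-2 : ℝ)) (b := 2)) isPreconnected_Ioo ?_ ?_ hx2 (hsum x) hx2
    · refine this.congr_deriv ?_
      have hg : Summable fun n => g' n x := by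
        rw [← summable_nat_add_iff 1]
        exact (hsum x).mapL (A x)
      rw [hg.tsum_eq_zero_add, (A x).map_tsum (hsum x)]
      show 0 + _ = _
      rw [zero_add]
    · intro n y _
      cases n with
      | zero => exact hasDerivAt_const y y0
      | succ n => exact hF n y
    · intro n y hy
      cases n with
      | zero => show ‖(0 : E)‖ ≤ 0; simp
      | succ n =>
        refine (hle n y).trans (mul_le_mul_of_nonneg_left ((hb n y).trans ?_) hK0)
        have : |y| ≤ 2 := abs_le.2 ⟨hy.1.le, hy.2.le⟩
        gcongr

/-- `(u, v)` solves `u' = v`, `v' = (p + μ) u` on `[0,1]`, i.e. `u` is a complex solution of the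
Sturm–Liouville equation with potential `p` and spectral parameter `-μ`, and `v` is its derivative.
The sign is chosen so that `u` behaves like a combination of `exp (± κ x)` with `κ ^ 2 = μ`. -/
def SLSol (p : ℝ → ℝ) (μ : ℂ) (u v : ℝ → ℂ) : Prop :=
  ∀ x ∈ Icc (0 : ℝ) 1, HasDerivAt u (v x) x ∧ HasDerivAt v (((p x : ℂ) + μ) * u x) x

/-- A solution with prescribed initial data, together with the solution `(w, z)` of the
inhomogeneous equation with zero data that will be its derivative with respect to `μ`. -/
theorem exists_sol (p : ℝ → ℝ) (hp : ContinuousOn p (Icc 0 1)) (μ a b : ℂ) :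
    ∃ u v w z : ℝ → ℂ, SLSol p μ u v ∧ u 0 = a ∧ v 0 = b ∧ w 0 = 0 ∧ z 0 = 0 ∧
      ∀ x ∈ Icc (0 : ℝ) 1, HasDerivAt w (z x) x ∧
        HasDerivAt z (((p x : ℂ) + μ) * w x + u x) x := by
  -- `p` is extended from `[0,1]` to a bounded continuous function on the whole line
  let P : ℝ → ℝ := IccExtend (zero_le_one' ℝ) ((Icc (0:ℝ) 1).domRestrict p)
  have hP : Continuous P := (continuousOn_iff_continuous_domRestrict.1 hp).Icc_extend'
  have hPe : ∀ x ∈ Icc (0:ℝ) 1, P x = p x := fun x hx => IccExtend_of_mem _ _ hx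
  obtain ⟨M, hM⟩ : ∃ M, ∀ x, ‖P x‖ ≤ M := by
    obtain ⟨M, hM⟩ := isCompact_Icc.exists_bound_of_continuousOn hp
    exact ⟨M, fun x => hM _ (projIcc 0 1 zero_le_one x).2⟩
  let c1 : ℂ × ℂ × ℂ × ℂ →L[ℝ] ℂ := ContinuousLinearMap.fst ℝ _ _
  let c2 : ℂ × ℂ × ℂ × ℂ →L[ℝ] ℂ :=
    (ContinuousLinearMap.fst ℝ _ _).comp (ContinuousLinearMap.snd ℝ _ _)
  let c34 : ℂ × ℂ × ℂ × ℂ →L[ℝ] ℂ × ℂ :=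
    (ContinuousLinearMap.snd ℝ _ _).comp (ContinuousLinearMap.snd ℝ _ _)
  let c3 : ℂ × ℂ × ℂ × ℂ →L[ℝ] ℂ := (ContinuousLinearMap.fst ℝ _ _).comp c34
  let c4 : ℂ × ℂ × ℂ × ℂ →L[ℝ] ℂ := (ContinuousLinearMap.snd ℝ _ _).comp c34
  let A0 : ℂ × ℂ × ℂ × ℂ →L[ℝ] ℂ × ℂ × ℂ × ℂ := c2.prod ((μ • c1).prod (c4.prod (μ • c3 + c1)))
  let A1 : ℂ × ℂ × ℂ × ℂ →L[ℝ] ℂ × ℂ × ℂ × ℂ :=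
    (0 : ℂ × ℂ × ℂ × ℂ →L[ℝ] ℂ).prod (c1.prod ((0 : ℂ × ℂ × ℂ × ℂ →L[ℝ] ℂ).prod c3))
  obtain ⟨y, hy0, hy⟩ := exists_linear_ode (fun x => A0 + P x • A1) (by fun_prop)
    (‖A0‖ + M * ‖A1‖) (fun x => (norm_add_le _ _).trans (by
      rw [norm_smul]; gcongr; exact hM x)) (a, b, 0, 0)
  have key : ∀ (c : ℂ × ℂ × ℂ × ℂ →L[ℝ] ℂ), ∀ x ∈ Icc (0:ℝ) 1,
      HasDerivAt (fun x => c (y x)) (c ((A0 + P x • A1) (y x))) x :=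
    fun c x hx => c.hasFDerivAt.comp_hasDerivAt x (hy x hx)
  have hA0 : ∀ e, A0 e = (e.2.1, μ * e.1, e.2.2.2, μ * e.2.2.1 + e.1) := fun _ => rfl
  have hA1 : ∀ e, A1 e = (0, e.1, 0, e.2.2.1) := fun _ => rfl
  have h1 : ∀ e, c1 e = e.1 := fun _ => rfl
  have h2 : ∀ e, c2 e = e.2.1 := fun _ => rfl
  have h3 : ∀ e, c3 e = e.2.2.1 := fun _ => rfl
  have h4 : ∀ e, c4 e = e.2.2.2 := fun _ => rfl
  refine ⟨fun x => c1 (y x), fun x => c2 (y x), fun x => c3 (y x), fun x => c4 (y x),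
    fun x hx => ⟨?_, ?_⟩, ?_, ?_, ?_, ?_, fun x hx => ⟨?_, ?_⟩⟩
  · refine (key c1 x hx).congr_deriv ?_
    simp [h1, h2, hA0, hA1]
  · refine (key c2 x hx).congr_deriv ?_
    simp [h1, h2, hA0, hA1, hPe x hx]; ring
  · simp [h1, hy0]
  · simp [h2, hy0]
  · simp [h3, hy0]
  · simp [h4, hy0]
  · refine (key c3 x hx).congr_deriv ?_
    simp [h3, h4, hA0, hA1]
  · refine (key c4 x hx).congr_deriv ?_
    simp [h1, h3, h4, hA0, hA1, hPe x hx]; ring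

/-! ### Dependence on the spectral parameter -/

/-- Gronwall's inequality for `u'' = c u + f`, in the norm `max (k ‖u‖) ‖u'‖`. The weight `k ≈ √‖c‖`
makes the growth rate `L` of order `√‖c‖` instead of `‖c‖`. -/
theorem sl_gronwall {u v c f : ℝ → ℂ} {k L ε : ℝ} (hk : 0 < k) (hkL : k ≤ L) (hε : 0 ≤ ε)
    (h : ∀ x ∈ Icc (0 : ℝ) 1, HasDerivAt u (v x) x ∧ HasDerivAt v (c x * u x + f x) x)
    (hc : ∀ x ∈ Icc (0 : ℝ) 1, ‖c x‖ ≤ L * k) (hf : ∀ x ∈ Icc (0 : ℝ) 1, ‖f x‖ ≤ ε) :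
    ∀ x ∈ Icc (0 : ℝ) 1, k * ‖u x‖ ≤ (max (k * ‖u 0‖) ‖v 0‖ + ε / L) * Real.exp L ∧
      ‖v x‖ ≤ (max (k * ‖u 0‖) ‖v 0‖ + ε / L) * Real.exp L := by
  have hL : 0 < L := hk.trans_le hkL
  have hd : ∀ x ∈ Icc (0 : ℝ) 1, HasDerivAt (fun x => ((k : ℂ) * u x, v x))
      ((k : ℂ) * v x, c x * u x + f x) x := fun x hx =>
    ((h x hx).1.const_mul (k : ℂ)).prodMk (h x hx).2
  have key := norm_le_gronwallBound_of_norm_deriv_right_le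
    (f := fun x => ((k : ℂ) * u x, v x)) (f' := fun x => ((k : ℂ) * v x, c x * u x + f x))
    (δ := max (k * ‖u 0‖) ‖v 0‖) (K := L) (ε := ε) (a := 0) (b := 1)
    (fun x hx => (hd x hx).continuousAt.continuousWithinAt)
    (fun x hx => (hd x ⟨hx.1, hx.2.le⟩).hasDerivWithinAt)
    (by simp [Prod.norm_def, abs_of_pos hk])
    (by
      intro x hx
      have hx' : x ∈ Icc (0 : ℝ) 1 := ⟨hx.1, hx.2.le⟩
      simp only [Prod.norm_def, norm_mul, Complex.norm_real, Real.norm_eq_abs, abs_of_pos hk]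
      have h1 : k * ‖u x‖ ≤ max (k * ‖u x‖) ‖v x‖ := le_max_left _ _
      have h2 : ‖v x‖ ≤ max (k * ‖u x‖) ‖v x‖ := le_max_right _ _
      apply max_le
      · nlinarith [norm_nonneg (v x)]
      · calc ‖c x * u x + f x‖ ≤ ‖c x‖ * ‖u x‖ + ‖f x‖ := by
              simpa using norm_add_le (c x * u x) (f x)
          _ ≤ L * k * ‖u x‖ + ε := by
              gcongr
              · exact hc x hx'
              · exact hf x hx'
          _ = L * (k * ‖u x‖) + ε := by ring
          _ ≤ _ := by gcongr)
  intro x hx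
  have h3 := key x hx
  have hδ : 0 ≤ max (k * ‖u 0‖) ‖v 0‖ := (norm_nonneg (v 0)).trans (le_max_right _ _)
  have h4 : gronwallBound (max (k * ‖u 0‖) ‖v 0‖) L ε (x - 0) ≤
      (max (k * ‖u 0‖) ‖v 0‖ + ε / L) * Real.exp L := by
    rw [gronwallBound_of_K_ne_0 hL.ne', add_mul]
    have : Real.exp (L * (x - 0)) ≤ Real.exp L := Real.exp_le_exp.2 (by nlinarith [hx.2])
    have h0 : 0 ≤ ε / L := by positivity
    exact add_le_add (mul_le_mul_of_nonneg_left this hδ)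
      (mul_le_mul_of_nonneg_left (by linarith) h0)
  simp only [Prod.norm_def, norm_mul, Complex.norm_real, Real.norm_eq_abs, abs_of_pos hk] at h3
  exact ⟨(le_max_left _ _).trans (h3.trans h4), (le_max_right _ _).trans (h3.trans h4)⟩

/-- A first-order expansion with quadratic error determines the derivative. -/
theorem hasDerivAt_of_quadratic {f : ℂ → ℂ} {f' μ : ℂ} {C : ℝ}
    (h : ∀ t : ℂ, ‖t‖ ≤ 1 → ‖f (μ + t) - f μ - t * f'‖ ≤ C * ‖t‖ ^ 2) : HasDerivAt f f' μ := by
  rw [hasDerivAt_iff_isLittleO_nhds_zero]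
  have h1 : (fun t : ℂ => f (μ + t) - f μ - t • f') =O[𝓝 0] fun t : ℂ => t ^ 2 := by
    refine Asymptotics.IsBigO.of_bound C ?_
    filter_upwards [Metric.closedBall_mem_nhds (0 : ℂ) one_pos] with t ht
    simpa using h t (by simpa using ht)
  exact h1.trans_isLittleO (by simpa using Asymptotics.isLittleO_pow_id (𝕜 := ℂ) one_lt_two)

/-- `f` is of order at most `1/2` and finite type: `‖f μ‖ ≤ A exp (B √(1 + ‖μ‖))`. The shift by `1`
keeps the bound uniform near `μ = 0`. -/
def OrdHalf (f : ℂ → ℂ) : Prop :=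
  ∃ A B : ℝ, 0 ≤ A ∧ 0 ≤ B ∧ ∀ μ, ‖f μ‖ ≤ A * Real.exp (B * √(1 + ‖μ‖))

theorem OrdHalf.mul {f g : ℂ → ℂ} (hf : OrdHalf f) (hg : OrdHalf g) :
    OrdHalf fun μ => f μ * g μ := by
  obtain ⟨A, B, hA, hB, h⟩ := hf
  obtain ⟨A', B', hA', hB', h'⟩ := hg
  refine ⟨A * A', B + B', by positivity, by positivity, fun μ => ?_⟩
  rw [norm_mul, add_mul, Real.exp_add]
  calc _ ≤ (A * Real.exp (B * √(1 + ‖μ‖))) * (A' * Real.exp (B' * √(1 + ‖μ‖))) := by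
        gcongr
        · exact h μ
        · exact h' μ
    _ = _ := by ring

theorem OrdHalf.add {f g : ℂ → ℂ} (hf : OrdHalf f) (hg : OrdHalf g) :
    OrdHalf fun μ => f μ + g μ := by
  obtain ⟨A, B, hA, hB, h⟩ := hf
  obtain ⟨A', B', hA', hB', h'⟩ := hg
  refine ⟨A + A', max B B', by positivity, by positivity, fun μ => ?_⟩
  rw [add_mul]
  refine (norm_add_le _ _).trans (add_le_add ((h μ).trans ?_) ((h' μ).trans ?_))
  · gcongr; exact le_max_left _ _
  · gcongr; exact le_max_right _ _

theorem OrdHalf.const (c : ℂ) : OrdHalf fun _ => c :=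
  ⟨‖c‖, 0, norm_nonneg _, le_rfl, fun μ => by simp⟩

theorem OrdHalf.sub {f g : ℂ → ℂ} (hf : OrdHalf f) (hg : OrdHalf g) :
    OrdHalf fun μ => f μ - g μ := by
  simpa [sub_eq_add_neg] using hf.add ((OrdHalf.const (-1)).mul hg)

/-- The solutions with fixed initial data, as functions of the spectral parameter: at each point
they and their derivatives are entire of order at most `1/2`. -/
theorem exists_family (p : ℝ → ℝ) (hp : ContinuousOn p (Icc 0 1)) (a b : ℂ) :
    ∃ u v : ℂ → ℝ → ℂ, (∀ μ, SLSol p μ (u μ) (v μ)) ∧ (∀ μ, u μ 0 = a) ∧ (∀ μ, v μ 0 = b) ∧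
      (∀ x ∈ Icc (0 : ℝ) 1, Differentiable ℂ (fun μ => u μ x)) ∧
      (∀ x ∈ Icc (0 : ℝ) 1, Differentiable ℂ (fun μ => v μ x)) ∧
      (∀ x ∈ Icc (0 : ℝ) 1, OrdHalf (fun μ => u μ x)) ∧
      (∀ x ∈ Icc (0 : ℝ) 1, OrdHalf (fun μ => v μ x)) := by
  choose u v w z hs hu hv hw hz hwz using fun μ : ℂ => exists_sol p hp μ a b
  obtain ⟨M, hM⟩ := isCompact_Icc.exists_bound_of_continuousOn hp
  have hM0 : 0 ≤ M := (norm_nonneg _).trans (hM 0 (by simp))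
  -- the derivative with respect to `μ` is the solution `w` of the inhomogeneous equation
  have hdiff : ∀ μ, ∃ C : ℝ, ∀ t : ℂ, ‖t‖ ≤ 1 → ∀ x ∈ Icc (0:ℝ) 1,
      ‖u (μ + t) x - u μ x - t * w μ x‖ ≤ C * ‖t‖ ^ 2 ∧
      ‖v (μ + t) x - v μ x - t * z μ x‖ ≤ C * ‖t‖ ^ 2 := by
    intro μ
    obtain ⟨W, hW⟩ := isCompact_Icc.exists_bound_of_continuousOn (s := Icc (0:ℝ) 1) (f := w μ)
      (fun x hx => (hwz μ x hx).1.continuousAt.continuousWithinAt)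
    have hW0 : 0 ≤ W := (norm_nonneg _).trans (hW 0 (by simp))
    set L := M + ‖μ‖ + 1 with hL
    have hL1 : 1 ≤ L := by have := norm_nonneg μ; linarith
    refine ⟨W / L * Real.exp L, fun t ht x hx => ?_⟩
    have := sl_gronwall (u := fun x => u (μ + t) x - u μ x - t * w μ x)
      (v := fun x => v (μ + t) x - v μ x - t * z μ x) (c := fun x => (p x : ℂ) + (μ + t))
      (f := fun x => t * t * w μ x) (k := 1) (L := L) (ε := ‖t‖ ^ 2 * W) one_pos hL1
      (by positivity)
      (fun x hx => ⟨((hs (μ + t) x hx).1.sub (hs μ x hx).1).sub ((hwz μ x hx).1.const_mul t),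
        (((hs (μ + t) x hx).2.sub (hs μ x hx).2).sub ((hwz μ x hx).2.const_mul t)).congr_deriv
          (by ring)⟩)
      (fun x hx => by
        calc ‖(p x : ℂ) + (μ + t)‖ ≤ ‖(p x : ℂ)‖ + (‖μ‖ + ‖t‖) :=
              (norm_add_le _ _).trans (by gcongr; exact norm_add_le _ _)
          _ ≤ L * 1 := by rw [Complex.norm_real]; linarith [hM x hx])
      (fun x hx => by
        rw [norm_mul, norm_mul, ← sq]; gcongr; exact hW x hx) x hx
    simp only [hu, hv, hw, hz, sub_self, mul_zero, norm_zero, max_self, zero_add, one_mul] at this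
    refine ⟨this.1.trans_eq (by ring), this.2.trans_eq (by ring)⟩
  -- the weight `k = √(1 + ‖μ‖)` in Gronwall's inequality yields order `1/2`
  have hgrow : ∀ μ, ∀ x ∈ Icc (0:ℝ) 1,
      √(1 + ‖μ‖) * ‖u μ x‖ ≤ (√(1 + ‖μ‖) * ‖a‖ + ‖b‖) * Real.exp ((M + 1) * √(1 + ‖μ‖)) ∧
      ‖v μ x‖ ≤ (√(1 + ‖μ‖) * ‖a‖ + ‖b‖) * Real.exp ((M + 1) * √(1 + ‖μ‖)) := by
    intro μ x hx
    have hk1 : 1 ≤ √(1 + ‖μ‖) := Real.one_le_sqrt.2 (by linarith [norm_nonneg μ])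
    have hk2 : √(1 + ‖μ‖) * √(1 + ‖μ‖) = 1 + ‖μ‖ :=
      Real.mul_self_sqrt (by linarith [norm_nonneg μ])
    set k := √(1 + ‖μ‖)
    have := sl_gronwall (u := u μ) (v := v μ) (c := fun x => (p x : ℂ) + μ)
      (f := fun x => 0) (k := k) (L := (M + 1) * k) (ε := 0) (by linarith) (by nlinarith) le_rfl
      (fun x hx => by simpa using hs μ x hx)
      (fun x hx => by
        calc ‖(p x : ℂ) + μ‖ ≤ ‖(p x : ℂ)‖ + ‖μ‖ := norm_add_le _ _
          _ ≤ M + ‖μ‖ := by rw [Complex.norm_real]; linarith [hM x hx]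
          _ ≤ (M + 1) * k * k := by nlinarith [norm_nonneg μ])
      (fun x hx => by simp) x hx
    rw [hu, hv, zero_div, add_zero] at this
    have hmax : max (k * ‖a‖) ‖b‖ ≤ k * ‖a‖ + ‖b‖ := by
      have := norm_nonneg a
      have := norm_nonneg b
      apply max_le
      · linarith
      · nlinarith
    exact ⟨this.1.trans (by gcongr), this.2.trans (by gcongr)⟩
  have hv2 : ∀ μ : ℂ, (√(1 + ‖μ‖) * ‖a‖ + ‖b‖) * Real.exp ((M + 1) * √(1 + ‖μ‖)) ≤
      (‖a‖ + ‖b‖) * Real.exp ((M + 2) * √(1 + ‖μ‖)) := by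
    intro (μ : ℂ)
    have hk1 : 1 ≤ √(1 + ‖μ‖) := Real.one_le_sqrt.2 (by linarith [norm_nonneg μ])
    have he : √(1 + ‖μ‖) ≤ Real.exp √(1 + ‖μ‖) := by
      linarith [Real.add_one_le_exp √(1 + ‖μ‖)]
    have : (M + 2) * √(1 + ‖μ‖) = √(1 + ‖μ‖) + (M + 1) * √(1 + ‖μ‖) := by ring
    rw [this, Real.exp_add, ← mul_assoc]
    gcongr
    nlinarith [norm_nonneg a, norm_nonneg b]
  refine ⟨u, v, hs, hu, hv, fun x hx μ => ?_, fun x hx μ => ?_, fun x hx => ?_, fun x hx => ?_⟩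
  · obtain ⟨C, hC⟩ := hdiff μ
    exact (hasDerivAt_of_quadratic fun t ht => (hC t ht x hx).1).differentiableAt
  · obtain ⟨C, hC⟩ := hdiff μ
    exact (hasDerivAt_of_quadratic fun t ht => (hC t ht x hx).2).differentiableAt
  · refine ⟨‖a‖ + ‖b‖, M + 2, by positivity, by positivity, fun μ => ?_⟩
    have hk1 : 1 ≤ √(1 + ‖μ‖) := Real.one_le_sqrt.2 (by linarith [norm_nonneg μ])
    refine le_trans ?_ ((hgrow μ x hx).1.trans (hv2 μ))
    nlinarith [norm_nonneg (u μ x)]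
  · exact ⟨‖a‖ + ‖b‖, M + 2, by positivity, by positivity, fun μ =>
      (hgrow μ x hx).2.trans (hv2 μ)⟩

theorem SLSol.eq_zero {p : ℝ → ℝ} (hp : ContinuousOn p (Icc 0 1)) {μ : ℂ} {u v : ℝ → ℂ}
    (h : SLSol p μ u v) (hu : u 0 = 0) (hv : v 0 = 0) : ∀ x ∈ Icc (0 : ℝ) 1, u x = 0 ∧ v x = 0 := by
  obtain ⟨M, hM⟩ := isCompact_Icc.exists_bound_of_continuousOn hp
  have hM0 : 0 ≤ M := (norm_nonneg _).trans (hM 0 (by simp))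
  intro x hx
  have := sl_gronwall (u := u) (v := v) (c := fun x => (p x : ℂ) + μ)
      (f := fun x => 0) (k := 1) (L := M + ‖μ‖ + 1) (ε := 0) one_pos
      (by linarith [norm_nonneg μ]) le_rfl
      (fun x hx => by simpa using h x hx)
      (fun x hx => by
        calc ‖(p x : ℂ) + μ‖ ≤ ‖(p x : ℂ)‖ + ‖μ‖ := norm_add_le _ _
          _ ≤ M + ‖μ‖ := by rw [Complex.norm_real]; linarith [hM x hx]
          _ ≤ _ := by linarith)
      (fun x hx => by simp) x hx
  simpa [hu, hv] using this

theorem SLSol.comb {p : ℝ → ℝ} {μ : ℂ} {u v u' v' : ℝ → ℂ} (h : SLSol p μ u v)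
    (h' : SLSol p μ u' v') (c d : ℂ) :
    SLSol p μ (fun x => c * u x + d * u' x) (fun x => c * v x + d * v' x) := fun x hx =>
  ⟨((h x hx).1.const_mul c).add ((h' x hx).1.const_mul d),
    (((h x hx).2.const_mul c).add ((h' x hx).2.const_mul d)).congr_deriv (by ring)⟩

/-- The reflection `x ↦ 1 - x` turns data at `1` into data at `0`. -/
theorem SLSol.reflect {p : ℝ → ℝ} {μ : ℂ} {u v : ℝ → ℂ} (h : SLSol p μ u v) :
    SLSol (fun x => p (1 - x)) μ (fun x => u (1 - x)) (fun x => -v (1 - x)) := by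
  intro x hx
  have hx' : 1 - x ∈ Icc (0 : ℝ) 1 := ⟨by linarith [hx.2], by linarith [hx.1]⟩
  have h1 : HasDerivAt (fun x : ℝ => 1 - x) (-1) x := by
    simpa using (hasDerivAt_id x).const_sub 1
  constructor
  · simpa [Function.comp_def] using (h _ hx').1.scomp x h1
  · simpa [Function.comp_def] using ((h _ hx').2.scomp x h1).fun_neg

/-! ### Entire functions of order one half -/

theorem bounded_of_tendsto {f : ℝ → ℂ} (hf : Continuous f) {l : ℂ} (h : Tendsto f atTop (𝓝 l)) :
    ∃ C, ∀ r, 0 ≤ r → ‖f r‖ ≤ C := by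
  obtain ⟨R, hR⟩ := eventually_atTop.1 (h.norm.eventually (gt_mem_nhds (lt_add_one ‖l‖)))
  obtain ⟨C, hC⟩ := (isCompact_Icc (a := (0:ℝ)) (b := R)).exists_bound_of_continuousOn
    hf.continuousOn
  refine ⟨max C (‖l‖ + 1), fun r hr => ?_⟩
  rcases le_total r R with h1 | h1
  · exact (hC r ⟨hr, h1⟩).trans (le_max_left _ _)
  · exact (hR r h1).le.trans (le_max_right _ _)

/-- An entire function of order at most `1/2` with a limit along both imaginary half-axes is
constant: `H (2 i w ^ 2)` has order one and is bounded on the real and imaginary axes, hence on each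
quadrant by Phragmén–Lindelöf, so Liouville's theorem applies. -/
theorem eq_of_ordHalf_of_tendsto {H : ℂ → ℂ} (hd : Differentiable ℂ H) (hg : OrdHalf H) {l : ℂ}
    (hp : Tendsto (fun r : ℝ => H (2 * r ^ 2 * Complex.I)) atTop (𝓝 l))
    (hm : Tendsto (fun r : ℝ => H (-(2 * r ^ 2 * Complex.I))) atTop (𝓝 l)) (μ : ℂ) : H μ = l := by
  have hc := hd.continuous
  obtain ⟨C1, hC1⟩ := bounded_of_tendsto (by fun_prop) hp
  obtain ⟨C2, hC2⟩ := bounded_of_tendsto (by fun_prop) hm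
  let G : ℂ → ℂ := fun w => H (2 * w ^ 2 * Complex.I)
  have hG : Differentiable ℂ G := hd.comp (by fun_prop)
  have hre : ∀ x : ℝ, ‖G x‖ ≤ max C1 C2 := fun x => by
    refine le_trans ?_ ((hC1 |x| (abs_nonneg x)).trans (le_max_left _ _))
    have : ((|x| : ℝ) : ℂ) ^ 2 = (x : ℂ) ^ 2 := by rw [← Complex.ofReal_pow, sq_abs]; simp
    rw [this]
  have him : ∀ x : ℝ, ‖G (x * Complex.I)‖ ≤ max C1 C2 := fun x => by
    refine le_trans ?_ ((hC2 |x| (abs_nonneg x)).trans (le_max_right _ _))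
    have : ((|x| : ℝ) : ℂ) ^ 2 = (x : ℂ) ^ 2 := by rw [← Complex.ofReal_pow, sq_abs]; simp
    rw [this]
    have : 2 * ((x : ℂ) * Complex.I) ^ 2 * Complex.I = -(2 * (x : ℂ) ^ 2 * Complex.I) := by
      rw [mul_pow, Complex.I_sq]; ring
    show ‖H _‖ ≤ _
    rw [this]
  obtain ⟨A, B, hA, hB, hAB⟩ := hg
  have hB' : ∀ S : Set ℂ, ∃ c < (2 : ℝ), ∃ B,
      G =O[Bornology.cobounded ℂ ⊓ 𝓟 S] fun z => Real.exp (B * ‖z‖ ^ c) := by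
    intro S
    refine ⟨1, one_lt_two, 2 * B, Asymptotics.IsBigO.of_bound (A * Real.exp B)
      (Eventually.of_forall fun z => (hAB _).trans ?_)⟩
    rw [Real.rpow_one, Real.norm_eq_abs, abs_of_pos (Real.exp_pos _),
      mul_assoc A (Real.exp B), ← Real.exp_add]
    have h1 : √(1 + ‖2 * z ^ 2 * Complex.I‖) ≤ 1 + 2 * ‖z‖ := by
      rw [Real.sqrt_le_left (by positivity)]
      simp only [norm_mul, norm_pow, Complex.norm_I, Complex.norm_ofNat]
      nlinarith [norm_nonneg z]
    gcongr
    nlinarith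
  have hGb : ∀ w, ‖G w‖ ≤ max C1 C2 := by
    intro w
    rcases le_total 0 w.re with h1 | h1 <;> rcases le_total 0 w.im with h2 | h2
    · exact PhragmenLindelof.quadrant_I hG.diffContOnCl (hB' _) (fun x _ => hre x)
        (fun x _ => him x) h1 h2
    · exact PhragmenLindelof.quadrant_IV hG.diffContOnCl (hB' _) (fun x _ => hre x)
        (fun x _ => him x) h1 h2
    · exact PhragmenLindelof.quadrant_II hG.diffContOnCl (hB' _) (fun x _ => hre x)
        (fun x _ => him x) h1 h2
    · exact PhragmenLindelof.quadrant_III hG.diffContOnCl (hB' _) (fun x _ => hre x)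
        (fun x _ => him x) h1 h2
  have hHb : Bornology.IsBounded (range H) := by
    refine isBounded_iff_forall_norm_le.2 ⟨max C1 C2, ?_⟩
    rintro _ ⟨ν, rfl⟩
    obtain ⟨w, hw⟩ := IsAlgClosed.exists_pow_nat_eq (ν / (2 * Complex.I)) (n := 2) two_pos
    have := hGb w
    have h2 : 2 * w ^ 2 * Complex.I = ν := by
      rw [hw]; field_simp [Complex.I_ne_zero]
    simpa only [G, h2] using this
  refine tendsto_nhds_unique (f := fun _ : ℝ => H μ) tendsto_const_nhds (hp.congr fun r => ?_)
  exact hd.apply_eq_apply_of_bounded hHb _ _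

/-- If `f` vanishes at the real zeros of `g`, and `f / g` tends to `1` along both imaginary half-axes,
then `f = g`, for entire functions of order at most `1/2`. The lower bound on `g` forces its zeros to
be real and simple, so that `f / g` is entire, and bounds `‖f / g‖` by `1 / |Im μ|` times a function
of order `1/2`. -/
theorem eq_of_quotient {f g g₂ : ℂ → ℂ} (hf : Differentiable ℂ f) (hg : Differentiable ℂ g)
    (hg₂ : Continuous g₂) (of : OrdHalf f) (og₂ : OrdHalf g₂) (K : ℝ)
    (hlow : ∀ μ : ℂ, |μ.im| ≤ (K * (1 + ‖μ‖)) ^ 2 * (‖g μ‖ * ‖g₂ μ‖))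
    (hz : ∀ t : ℝ, g t = 0 → f t = 0)
    (hp : Tendsto (fun r : ℝ => f (2 * r ^ 2 * Complex.I) / g (2 * r ^ 2 * Complex.I)) atTop (𝓝 1))
    (hm : Tendsto (fun r : ℝ => f (-(2 * r ^ 2 * Complex.I)) / g (-(2 * r ^ 2 * Complex.I)))
      atTop (𝓝 1)) (μ : ℂ) : f μ = g μ := by
  have hreal : ∀ ν, g ν = 0 → ν.im = 0 := fun ν h => by
    have := hlow ν
    rw [h, norm_zero, zero_mul, mul_zero] at this
    exact abs_nonpos_iff.1 this
  have hz' : ∀ ν, g ν = 0 → f ν = 0 := fun ν h => by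
    have h1 : ((ν.re : ℝ) : ℂ) = ν := Complex.ext (by simp) (by simp [hreal ν h])
    have := hz ν.re
    rw [h1] at this
    exact this h
  -- at a double zero `ν`, the lower bound would fail at `ν + i t` for small `t`
  have hsimple : ∀ ν, g ν = 0 → deriv g ν ≠ 0 := by
    intro ν h0 hd
    have hder : HasDerivAt g 0 ν := hd ▸ (hg ν).hasDerivAt
    rw [hasDerivAt_iff_isLittleO_nhds_zero] at hder
    let Φ : ℂ → ℝ := fun h => (K * (1 + ‖ν + h‖)) ^ 2 * ‖g₂ (ν + h)‖
    have hΦ : Continuous Φ := by fun_prop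
    have hΦ0 : 0 ≤ Φ 0 := by positivity
    have e1 : ∀ᶠ h in 𝓝 (0:ℂ), Φ h < Φ 0 + 1 :=
      (hΦ.tendsto 0).eventually (gt_mem_nhds (lt_add_one _))
    have e2 := hder.def (c := 1 / (2 * (Φ 0 + 1))) (by positivity)
    obtain ⟨δ, hδ, hb⟩ := Metric.eventually_nhds_iff.1 (e1.and e2)
    have hh : ‖((δ / 2 : ℝ) : ℂ) * Complex.I‖ = δ / 2 := by
      rw [norm_mul, Complex.norm_I, mul_one, Complex.norm_real, Real.norm_eq_abs,
        abs_of_pos (by positivity)]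
    obtain ⟨b1, b2⟩ := @hb (((δ / 2 : ℝ) : ℂ) * Complex.I) (by
      rw [dist_zero_right, hh]; linarith)
    have b3 := hlow (ν + ((δ / 2 : ℝ) : ℂ) * Complex.I)
    rw [hh, h0] at b2
    simp only [sub_zero, smul_zero] at b2
    have him : (ν + ((δ / 2 : ℝ) : ℂ) * Complex.I).im = δ / 2 := by
      simp [hreal ν h0]
    rw [him, abs_of_pos (by positivity)] at b3
    have b4 : δ / 2 ≤ Φ (((δ / 2 : ℝ) : ℂ) * Complex.I) *
        ‖g (ν + ((δ / 2 : ℝ) : ℂ) * Complex.I)‖ := b3.trans_eq (by simp only [Φ]; ring)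
    have b5 : δ / 2 ≤ (Φ 0 + 1) * (1 / (2 * (Φ 0 + 1)) * (δ / 2)) :=
      b4.trans (mul_le_mul b1.le b2 (norm_nonneg _) (by positivity))
    have b6 : (Φ 0 + 1) * (1 / (2 * (Φ 0 + 1)) * (δ / 2)) = δ / 4 := by field_simp; norm_num
    linarith
  classical
  let H : ℂ → ℂ := fun ν => if g ν = 0 then deriv f ν / deriv g ν else f ν / g ν
  have hH : ∀ ν, g ν ≠ 0 → H ν = f ν / g ν := fun ν h => if_neg h
  have hHd : Differentiable ℂ H := by
    intro ν
    by_cases h0 : g ν = 0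
    · have hF : Differentiable ℂ (dslope f ν) := by
        rw [← differentiableOn_univ, Complex.differentiableOn_dslope univ_mem]
        exact hf.differentiableOn
      have hG : Differentiable ℂ (dslope g ν) := by
        rw [← differentiableOn_univ, Complex.differentiableOn_dslope univ_mem]
        exact hg.differentiableOn
      have hG0 : dslope g ν ν ≠ 0 := by rw [dslope_same]; exact hsimple ν h0
      refine ((hF ν).div (hG ν) hG0).congr_of_eventuallyEq ?_
      filter_upwards [hG.continuous.continuousAt.eventually_ne hG0] with ξ hξ
      by_cases hξν : ξ = ν
      · subst hξν
        simp [H, h0]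
      · have h1 : f ξ = (ξ - ν) * dslope f ν ξ := by
          have := sub_smul_dslope f ν ξ
          rw [hz' ν h0, sub_zero, smul_eq_mul] at this
          exact this.symm
        have h2 : g ξ = (ξ - ν) * dslope g ν ξ := by
          have := sub_smul_dslope g ν ξ
          rw [h0, sub_zero, smul_eq_mul] at this
          exact this.symm
        have h3 : ξ - ν ≠ 0 := sub_ne_zero.2 hξν
        rw [hH ξ (by rw [h2]; exact mul_ne_zero h3 hξ), h1, h2]
        simp only [Pi.div_apply]
        field_simp
    · refine ((hf ν).div (hg ν) h0).congr_of_eventuallyEq ?_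
      filter_upwards [hg.continuous.continuousAt.eventually_ne h0] with ξ hξ
      exact hH ξ hξ
  have hHo : OrdHalf H := by
    obtain ⟨A, B, hA, hB, hAB⟩ := of.mul og₂
    have h1 : ∀ ν, |ν.im| * ‖H ν‖ ≤ (K * (1 + ‖ν‖)) ^ 2 * (A * Real.exp (B * √(1 + ‖ν‖))) := by
      intro ν
      by_cases hi : ν.im = 0
      · rw [hi, abs_zero, zero_mul]; positivity
      · have h0 : g ν ≠ 0 := fun h => hi (hreal ν h)
        have hn : 0 < ‖g ν‖ := norm_pos_iff.2 h0
        rw [hH ν h0, norm_div]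
        calc _ ≤ (K * (1 + ‖ν‖)) ^ 2 * (‖g ν‖ * ‖g₂ ν‖) * (‖f ν‖ / ‖g ν‖) := by
              gcongr; exact hlow ν
          _ = (K * (1 + ‖ν‖)) ^ 2 * ‖f ν * g₂ ν‖ := by rw [norm_mul]; field_simp
          _ ≤ _ := by gcongr; exact hAB ν
    refine ⟨8 * K ^ 2 * A, 3 * B + 12, by positivity, by positivity, fun ν => ?_⟩
    set R := 2 * ‖ν‖ + 1 with hR
    have hR1 : 1 ≤ R := by linarith [norm_nonneg ν]
    set D := 2 * R * ((K * (1 + R)) ^ 2 * (A * Real.exp (B * √(1 + R)))) with hD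
    -- On the circle `‖ξ‖ = R` one has `‖ξ ^ 2 - R ^ 2‖ = 2 R |Im ξ|`, so this factor absorbs the
    -- singularity of the bound `h1` on the real axis; conclude by the maximum principle.
    have hmax : ‖(ν ^ 2 - (R : ℂ) ^ 2) * H ν‖ ≤ D := by
      refine Complex.norm_le_of_forall_mem_frontier_norm_le
        (f := fun ξ => (ξ ^ 2 - (R : ℂ) ^ 2) * H ξ) (U := Metric.ball 0 R) Metric.isBounded_ball
        (Differentiable.diffContOnCl (by fun_prop)) ?_ (subset_closure ?_)
      · intro ξ hξ
        rw [frontier_ball 0 (by linarith), mem_sphere_zero_iff_norm] at hξ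
        have h3 : ‖ξ ^ 2 - (R : ℂ) ^ 2‖ = 2 * R * |ξ.im| := by
          have e1 : ξ ^ 2 - (R : ℂ) ^ 2 = ξ * (2 * ξ.im * Complex.I) := by
            have : (R : ℂ) ^ 2 = ξ * (starRingEnd ℂ) ξ := by
              rw [Complex.mul_conj, Complex.normSq_eq_norm_sq, hξ]; push_cast; rfl
            rw [this]
            have h5 : ξ - (starRingEnd ℂ) ξ = 2 * ξ.im * Complex.I := by
              rw [Complex.sub_conj]; push_cast; ring
            rw [← h5]; ring
          rw [e1]
          simp only [norm_mul, hξ, Complex.norm_ofNat, Complex.norm_real, Complex.norm_I,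
            Real.norm_eq_abs]
          ring
        rw [norm_mul, h3, mul_assoc]
        have := h1 ξ
        rw [hξ] at this
        rw [hD]
        gcongr
      · rw [mem_ball_zero_iff]; linarith [norm_nonneg ν]
    have hlow2 : R ^ 2 / 2 ≤ ‖ν ^ 2 - (R : ℂ) ^ 2‖ := by
      have h4 : ‖(R : ℂ) ^ 2‖ - ‖ν ^ 2‖ ≤ ‖ν ^ 2 - (R : ℂ) ^ 2‖ := by
        rw [norm_sub_rev]; exact norm_sub_norm_le _ _
      rw [norm_pow, norm_pow, Complex.norm_real, Real.norm_eq_abs, abs_of_pos (by linarith)] at h4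
      nlinarith [norm_nonneg ν]
    rw [norm_mul] at hmax
    have h5 : R * ‖H ν‖ ≤ 2 * D := by
      nlinarith [mul_le_mul_of_nonneg_right hlow2 (norm_nonneg (H ν)), norm_nonneg (H ν),
        mul_nonneg (by linarith : (0:ℝ) ≤ R) (norm_nonneg (H ν))]
    have h6 : ‖H ν‖ ≤ 4 * ((K * (1 + R)) ^ 2 * (A * Real.exp (B * √(1 + R)))) := by
      have : R * ‖H ν‖ ≤ R * (4 * ((K * (1 + R)) ^ 2 * (A * Real.exp (B * √(1 + R))))) := by
        refine h5.trans_eq ?_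
        rw [hD]; ring
      exact le_of_mul_le_mul_left this (by linarith)
    refine h6.trans ?_
    have hs : 1 + R = 2 * (1 + ‖ν‖) := by rw [hR]; ring
    have hsq : √(1 + R) ≤ 3 * √(1 + ‖ν‖) := by
      rw [hs, Real.sqrt_mul (by norm_num)]
      gcongr
      rw [Real.sqrt_le_left] <;> norm_num
    set s := √(1 + ‖ν‖)
    have hss : s ^ 2 = 1 + ‖ν‖ := Real.sq_sqrt (by positivity)
    have hs0 : 0 ≤ s := Real.sqrt_nonneg _
    have h7 : 4 * (1 + R) ^ 2 ≤ 8 * Real.exp (12 * s) := by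
      have e1 : 1 + s ≤ Real.exp s := by linarith [Real.add_one_le_exp s]
      have e2 : (2 * s ^ 2) ≤ Real.exp (2 * s) * 2 := by
        have : Real.exp (2 * s) = Real.exp s ^ 2 := by rw [← Real.exp_nat_mul]; norm_num
        rw [this]; nlinarith
      have e3 : (2 : ℝ) ≤ Real.exp (8 * s) := by
        have : (1 : ℝ) ≤ s := Real.one_le_sqrt.2 (by linarith [norm_nonneg ν])
        linarith [Real.add_one_le_exp (8 * s)]
      have e4 : Real.exp (12 * s) = Real.exp (2 * s) ^ 2 * Real.exp (8 * s) := by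
        rw [← Real.exp_nat_mul, ← Real.exp_add]; congr 1; push_cast; ring
      rw [hs, ← hss, e4]
      calc 4 * (2 * s ^ 2) ^ 2 ≤ 4 * (Real.exp (2 * s) * 2) ^ 2 := by gcongr
        _ = 8 * (Real.exp (2 * s) ^ 2 * 2) := by ring
        _ ≤ _ := by gcongr
    calc 4 * ((K * (1 + R)) ^ 2 * (A * Real.exp (B * √(1 + R))))
        = K ^ 2 * A * (4 * (1 + R) ^ 2) * Real.exp (B * √(1 + R)) := by ring
      _ ≤ K ^ 2 * A * (8 * Real.exp (12 * s)) * Real.exp (B * (3 * s)) := by gcongr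
      _ = 8 * K ^ 2 * A * Real.exp ((3 * B + 12) * s) := by
        rw [add_mul, Real.exp_add, show 3 * B * s = B * (3 * s) by ring]; ring
  have hne : ∀ r : ℝ, 0 < r → ∀ c : ℂ, c = 2 * r ^ 2 * Complex.I ∨ c = -(2 * r ^ 2 * Complex.I) →
      g c ≠ 0 := by
    intro r hr c hc h0
    have h1 := hreal c h0
    have h2 : (2 * (r : ℂ) ^ 2 * Complex.I) = ((2 * r ^ 2 : ℝ) : ℂ) * Complex.I := by push_cast; ring
    have h3 : (2 * (r : ℂ) ^ 2 * Complex.I).im = 2 * r ^ 2 := by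
      rw [h2, Complex.im_ofReal_mul, Complex.I_im, mul_one]
    rcases hc with rfl | rfl
    · rw [h3] at h1
      have : 0 < 2 * r ^ 2 := by positivity
      linarith
    · rw [Complex.neg_im, h3] at h1
      have : 0 < 2 * r ^ 2 := by positivity
      linarith
  have hone := eq_of_ordHalf_of_tendsto hHd hHo (l := 1)
    (hp.congr' (by
      filter_upwards [eventually_gt_atTop 0] with r hr
      exact (hH _ (hne r hr _ (Or.inl rfl))).symm))
    (hm.congr' (by
      filter_upwards [eventually_gt_atTop 0] with r hr
      exact (hH _ (hne r hr _ (Or.inr rfl))).symm))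
  by_cases h0 : g μ = 0
  · rw [h0, hz' μ h0]
  · have := hone μ
    rw [hH μ h0, div_eq_one_iff_eq h0] at this
    exact this

/-! ### Asymptotics for large spectral parameter -/

/-- Asymptotics of solutions for `μ = κ ^ 2` with `Re κ ≥ 0`: the amplitudes of the two exponentials,
`A = exp (-κ x) (v + κ u)` and `B = exp (-κ x) (v - κ u)`, satisfy `A' = p (A - B) / (2 κ)` and
`B' = -2 κ B + p (A - B) / (2 κ)`, so `A` stays within `O(1 / ‖κ‖)` of its initial value and `B`
decays to `O(1 / ‖κ‖)`. -/
theorem sl_asymp {p : ℝ → ℝ} {M : ℝ} (hM0 : 0 ≤ M) (hM : ∀ x ∈ Icc (0 : ℝ) 1, |p x| ≤ M)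
    {κ : ℂ} (hre : 0 ≤ κ.re) (h1 : 1 ≤ ‖κ‖) {u v : ℝ → ℂ} (h : SLSol p (κ ^ 2) u v) :
    ∃ A B : ℝ → ℂ, (∀ x, u x = Complex.exp (κ * x) * (A x - B x) / (2 * κ)) ∧
      (∀ x, v x = Complex.exp (κ * x) * (A x + B x) / 2) ∧
      (∀ x ∈ Icc (0 : ℝ) 1, ‖A x - (v 0 + κ * u 0)‖ ≤
        M * Real.exp M * (‖v 0 + κ * u 0‖ + ‖v 0 - κ * u 0‖) / ‖κ‖) ∧
      (∀ x ∈ Icc (0 : ℝ) 1, ‖B x‖ ≤ Real.exp (-2 * κ.re * x) * ‖v 0 - κ * u 0‖ +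
        M * Real.exp M * (‖v 0 + κ * u 0‖ + ‖v 0 - κ * u 0‖) / ‖κ‖) := by
  have hκ : κ ≠ 0 := norm_pos_iff.1 (by linarith)
  have hκ0 : 0 < ‖κ‖ := by linarith
  set a0 := v 0 + κ * u 0 with ha0
  set b0 := v 0 - κ * u 0 with hb0
  set S := ‖a0‖ + ‖b0‖ with hS
  have hS0 : 0 ≤ S := by positivity
  let A : ℝ → ℂ := fun x => Complex.exp (-κ * x) * (v x + κ * u x)
  let B : ℝ → ℂ := fun x => Complex.exp (-κ * x) * (v x - κ * u x)
  have hA0 : A 0 = a0 := by simp [A, ha0]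
  have hB0 : B 0 = b0 := by simp [B, hb0]
  have hexp : ∀ x : ℝ, Complex.exp (κ * x) * Complex.exp (-κ * x) = 1 := fun x => by
    rw [← Complex.exp_add]; simp
  have hu : ∀ x, u x = Complex.exp (κ * x) * (A x - B x) / (2 * κ) := fun x => by
    rw [eq_div_iff (by simpa using hκ)]
    simp only [A, B]
    linear_combination (-(2 * κ * u x)) * hexp x
  have hv : ∀ x, v x = Complex.exp (κ * x) * (A x + B x) / 2 := fun x => by
    simp only [A, B]
    linear_combination (-(v x)) * hexp x
  have hde : ∀ (c : ℂ) (x : ℝ), HasDerivAt (fun x : ℝ => Complex.exp (c * x))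
      (Complex.exp (c * x) * c) x := fun c x => by
    have : HasDerivAt (fun x : ℝ => c * (x : ℂ)) c x := by
      simpa using (Complex.ofRealCLM.hasDerivAt (x := x)).const_mul c
    exact this.cexp
  have hABu : ∀ x, (p x : ℂ) * (A x - B x) / (2 * κ) =
      Complex.exp (-κ * x) * (p x * u x) := fun x => by
    rw [div_eq_iff (by simpa using hκ)]
    simp only [A, B]
    ring
  have hAd : ∀ x ∈ Icc (0 : ℝ) 1, HasDerivAt A (p x * (A x - B x) / (2 * κ)) x := fun x hx => by
    refine ((hde (-κ) x).mul ((h x hx).2.add ((h x hx).1.const_mul κ))).congr_deriv ?_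
    rw [hABu]
    simp only [B, Pi.add_apply, Pi.sub_apply]
    ring
  have hBd : ∀ x ∈ Icc (0 : ℝ) 1,
      HasDerivAt B (-2 * κ * B x + p x * (A x - B x) / (2 * κ)) x := fun x hx => by
    refine ((hde (-κ) x).mul ((h x hx).2.sub ((h x hx).1.const_mul κ))).congr_deriv ?_
    rw [hABu]
    simp only [B, Pi.add_apply, Pi.sub_apply]
    ring
  have hbd : ∀ x ∈ Icc (0 : ℝ) 1, ‖(p x : ℂ) * (A x - B x) / (2 * κ)‖ ≤
      M * (‖A x‖ + ‖B x‖) / (2 * ‖κ‖) := fun x hx => by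
    rw [norm_div, norm_mul, norm_mul, Complex.norm_real, Complex.norm_ofNat, Real.norm_eq_abs]
    gcongr
    · exact hM x hx
    · exact norm_sub_le _ _
  -- the energy `‖A‖² + ‖B‖²` grows at most like `exp (2 M x / ‖κ‖)`
  have hAB : ∀ x ∈ Icc (0 : ℝ) 1, ‖A x‖ ^ 2 + ‖B x‖ ^ 2 ≤ (Real.exp M * S) ^ 2 := by
    let g : ℝ → ℝ := fun x => (‖A x‖ ^ 2 + ‖B x‖ ^ 2) * Real.exp (-(2 * M) * x)
    have hg : ∀ x ∈ Icc (0 : ℝ) 1, ∃ g', HasDerivAt g g' x ∧ g' ≤ 0 := fun x hx => by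
      have e1 : HasDerivAt (fun x : ℝ => Real.exp (-(2 * M) * x))
          (Real.exp (-(2 * M) * x) * (-(2 * M))) x := by
        simpa using ((hasDerivAt_id x).const_mul (-(2 * M))).exp
      refine ⟨_, (((hAd x hx).norm_sq.add (hBd x hx).norm_sq).mul e1), ?_⟩
      set w := (p x : ℂ) * (A x - B x) / (2 * κ) with hw
      have hw' := hbd x hx
      rw [← hw] at hw'
      have i1 : inner ℝ (A x) w ≤ ‖A x‖ * ‖w‖ := real_inner_le_norm _ _
      have i2 : inner ℝ (B x) w ≤ ‖B x‖ * ‖w‖ := real_inner_le_norm _ _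
      have i3 : inner ℝ (B x) (-2 * κ * B x + w) = -2 * κ.re * ‖B x‖ ^ 2 + inner ℝ (B x) w := by
        rw [inner_add_right]
        congr 1
        rw [Complex.inner, ← Complex.normSq_eq_norm_sq, Complex.normSq_apply]
        simp
        ring
      have i4 : ‖w‖ ≤ M * (‖A x‖ + ‖B x‖) / 2 := hw'.trans (by
        apply div_le_div_of_nonneg_left (by positivity) (by norm_num) (by linarith))
      have i5 : 0 ≤ κ.re * ‖B x‖ ^ 2 := by positivity
      have i6 : (‖A x‖ + ‖B x‖) * ‖w‖ ≤ (‖A x‖ + ‖B x‖) * (M * (‖A x‖ + ‖B x‖) / 2) := by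
        gcongr
      have i7 : 0 ≤ M * (‖A x‖ - ‖B x‖) ^ 2 := by positivity
      have : 2 * inner ℝ (A x) w + 2 * inner ℝ (B x) (-2 * κ * B x + w) -
          2 * M * (‖A x‖ ^ 2 + ‖B x‖ ^ 2) ≤ 0 := by
        rw [i3]; nlinarith
      have e2 := Real.exp_pos (-(2 * M) * x)
      simp only [Pi.add_apply]
      nlinarith
    have hanti : AntitoneOn g (Icc 0 1) := by
      refine antitoneOn_of_deriv_nonpos (convex_Icc 0 1) (fun x hx => ?_) (fun x hx => ?_)
        (fun x hx => ?_)
      · obtain ⟨g', e, -⟩ := hg x hx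
        exact e.continuousAt.continuousWithinAt
      · obtain ⟨g', e, -⟩ := hg x (interior_subset hx)
        exact e.differentiableAt.differentiableWithinAt
      · obtain ⟨g', e, e'⟩ := hg x (interior_subset hx)
        rw [e.deriv]; exact e'
    intro x hx
    have h2 : g x ≤ g 0 := hanti (by simp) hx hx.1
    simp only [g, hA0, hB0, mul_zero, Real.exp_zero, mul_one] at h2
    have h3 : ‖a0‖ ^ 2 + ‖b0‖ ^ 2 ≤ S ^ 2 := by
      rw [hS]; nlinarith [norm_nonneg a0, norm_nonneg b0]
    have h4 : Real.exp (-(2 * M) * x) * Real.exp M ^ 2 ≥ 1 := by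
      rw [← Real.exp_nat_mul, ← Real.exp_add]
      apply Real.one_le_exp
      push_cast
      nlinarith [hx.2]
    calc ‖A x‖ ^ 2 + ‖B x‖ ^ 2
        ≤ (‖A x‖ ^ 2 + ‖B x‖ ^ 2) * (Real.exp (-(2 * M) * x) * Real.exp M ^ 2) :=
          le_mul_of_one_le_right (by positivity) h4
      _ = (‖A x‖ ^ 2 + ‖B x‖ ^ 2) * Real.exp (-(2 * M) * x) * Real.exp M ^ 2 := by ring
      _ ≤ S ^ 2 * Real.exp M ^ 2 := by gcongr; exact h2.trans h3
      _ = _ := by ring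
  have hw : ∀ x ∈ Icc (0 : ℝ) 1, ‖(p x : ℂ) * (A x - B x) / (2 * κ)‖ ≤
      M * Real.exp M * S / ‖κ‖ := fun x hx => by
    have e0 : 0 ≤ Real.exp M * S := by positivity
    have e1 : ‖A x‖ ≤ Real.exp M * S :=
      abs_le_of_sq_le_sq' (by nlinarith [hAB x hx, sq_nonneg ‖B x‖]) e0 |>.2
    have e2 : ‖B x‖ ≤ Real.exp M * S :=
      abs_le_of_sq_le_sq' (by nlinarith [hAB x hx, sq_nonneg ‖A x‖]) e0 |>.2
    refine (hbd x hx).trans ?_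
    rw [div_le_div_iff₀ (by positivity) hκ0]
    have : M * (‖A x‖ + ‖B x‖) ≤ M * (Real.exp M * S + Real.exp M * S) := by gcongr
    nlinarith
  refine ⟨A, B, hu, hv, fun x hx => ?_, fun x hx => ?_⟩
  · have := Convex.norm_image_sub_le_of_norm_hasDerivWithin_le
      (fun y hy => (hAd y hy).hasDerivWithinAt) hw (convex_Icc 0 1) (left_mem_Icc.2 zero_le_one) hx
    rw [hA0] at this
    refine this.trans (mul_le_of_le_one_right (by positivity) ?_)
    rw [sub_zero, Real.norm_eq_abs, abs_of_nonneg hx.1]; exact hx.2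
  · have hsub : ∀ y ∈ Icc (0 : ℝ) x, y ∈ Icc (0 : ℝ) 1 := fun y hy => ⟨hy.1, hy.2.trans hx.2⟩
    have hne : ∀ y : ℝ, ‖Complex.exp (2 * κ * y)‖ = Real.exp (2 * κ.re * y) := fun y => by
      rw [Complex.norm_exp]; simp
    -- multiplying `B` by `exp (2 κ y)` removes the term `-2 κ B` from its derivative
    have := Convex.norm_image_sub_le_of_norm_hasDerivWithin_le
      (f := fun y : ℝ => Complex.exp (2 * κ * y) * B y)
      (f' := fun y => Complex.exp (2 * κ * y) * (p y * (A y - B y) / (2 * κ)))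
      (C := Real.exp (2 * κ.re * x) * (M * Real.exp M * S / ‖κ‖))
      (fun y hy => (((hde (2 * κ) y).mul (hBd y (hsub y hy))).congr_deriv
        (by ring)).hasDerivWithinAt)
      (fun y hy => by
        rw [norm_mul, hne]
        have := hw y (hsub y hy)
        have h3 := hy.2
        gcongr) (convex_Icc 0 x) (left_mem_Icc.2 hx.1) (right_mem_Icc.2 hx.1)
    simp only [Complex.ofReal_zero, mul_zero, Complex.exp_zero, one_mul, hB0] at this
    have h2 : ‖Complex.exp (2 * κ * x) * B x‖ ≤ ‖b0‖ +
        Real.exp (2 * κ.re * x) * (M * Real.exp M * S / ‖κ‖) := by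
      have h3 := norm_add_le b0 (Complex.exp (2 * κ * x) * B x - b0)
      rw [add_sub_cancel] at h3
      have h4 : Real.exp (2 * κ.re * x) * (M * Real.exp M * S / ‖κ‖) * ‖x - 0‖ ≤
        Real.exp (2 * κ.re * x) * (M * Real.exp M * S / ‖κ‖) := by
        refine mul_le_of_le_one_right (by positivity) ?_
        rw [sub_zero, Real.norm_eq_abs, abs_of_nonneg hx.1]; exact hx.2
      linarith
    rw [norm_mul, hne] at h2
    have h5 : Real.exp (-2 * κ.re * x) * Real.exp (2 * κ.re * x) = 1 := by
      rw [← Real.exp_add]; simp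
    calc ‖B x‖ = Real.exp (-2 * κ.re * x) * (Real.exp (2 * κ.re * x) * ‖B x‖) := by
          rw [← mul_assoc, h5, one_mul]
      _ ≤ Real.exp (-2 * κ.re * x) * (‖b0‖ +
        Real.exp (2 * κ.re * x) * (M * Real.exp M * S / ‖κ‖)) := by gcongr
      _ = _ := by rw [mul_add, ← mul_assoc, h5, one_mul]

/-- Leading asymptotics at a point `x > 0` along a ray `κ = r σ`, `Re σ = 1`:
`u ~ (b + κ a) exp (κ x) / (2 κ)` and `v ~ (b + κ a) exp (κ x) / 2`. They do not depend on the
potential. -/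
theorem sl_ray {p : ℝ → ℝ} (hp : ContinuousOn p (Icc 0 1)) {u v : ℂ → ℝ → ℂ} {a b : ℂ}
    (h : ∀ μ, SLSol p μ (u μ) (v μ)) (hu : ∀ μ, u μ 0 = a) (hv : ∀ μ, v μ 0 = b)
    (hab : a ≠ 0 ∨ b ≠ 0) {σ : ℂ} (hσ : σ.re = 1) {x : ℝ} (hx : x ∈ Ioc (0 : ℝ) 1) :
    (∀ᶠ r : ℝ in atTop, b + r * σ * a ≠ 0) ∧
    Tendsto (fun r : ℝ => 2 * (r * σ) * u ((r * σ) ^ 2) x * Complex.exp (-(r * σ * x)) /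
      (b + r * σ * a)) atTop (𝓝 1) ∧
    Tendsto (fun r : ℝ => 2 * v ((r * σ) ^ 2) x * Complex.exp (-(r * σ * x)) /
      (b + r * σ * a)) atTop (𝓝 1) := by
  obtain ⟨M, hM⟩ := isCompact_Icc.exists_bound_of_continuousOn hp
  have hM0 : 0 ≤ M := (norm_nonneg _).trans (hM 0 (by simp))
  have hσ1 : 1 ≤ ‖σ‖ := by
    have := Complex.abs_re_le_norm σ
    rwa [hσ, abs_one] at this
  have hκ : ∀ r : ℝ, 0 ≤ r → r ≤ ‖(r : ℂ) * σ‖ := fun r hr => by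
    rw [norm_mul, Complex.norm_real, Real.norm_eq_abs, abs_of_nonneg hr]
    nlinarith
  -- the growing exponential is not dominated by the decaying one in the initial data
  have hdom : ∀ᶠ r : ℝ in atTop, b + r * σ * a ≠ 0 ∧
      ‖b - r * σ * a‖ ≤ 2 * ‖b + r * σ * a‖ := by
    by_cases ha : a = 0
    · have hb : b ≠ 0 := by tauto
      refine Eventually.of_forall fun r => ?_
      simp only [ha, mul_zero, add_zero, sub_zero]
      exact ⟨hb, by linarith [norm_nonneg b]⟩
    · have ha' : 0 < ‖a‖ := norm_pos_iff.2 ha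
      filter_upwards [eventually_gt_atTop (3 * ‖b‖ / ‖a‖), eventually_ge_atTop 0] with r hr hr0
      rw [div_lt_iff₀ ha'] at hr
      have e1 : 3 * ‖b‖ < ‖(r : ℂ) * σ * a‖ := by
        rw [norm_mul]
        exact hr.trans_le (by gcongr; exact hκ r hr0)
      have e2 := norm_sub_le b ((r : ℂ) * σ * a)
      have e3 : ‖(r : ℂ) * σ * a‖ ≤ ‖b + r * σ * a‖ + ‖b‖ := by
        have := norm_sub_le (b + r * σ * a) b
        rwa [add_sub_cancel_left] at this
      refine ⟨norm_pos_iff.1 (by linarith [norm_nonneg b]), by linarith⟩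
  -- normalised amplitudes of the two exponentials
  have key : ∃ A B : ℝ → ℂ, Tendsto A atTop (𝓝 1) ∧ Tendsto B atTop (𝓝 0) ∧
      ∀ᶠ r : ℝ in atTop,
        2 * (r * σ) * u ((r * σ) ^ 2) x * Complex.exp (-(r * σ * x)) / (b + r * σ * a) =
          A r - B r ∧
        2 * v ((r * σ) ^ 2) x * Complex.exp (-(r * σ * x)) / (b + r * σ * a) = A r + B r := by
    have hex : ∀ r : ℝ, ∃ A B : ℂ, 1 ≤ r →
        u ((r * σ) ^ 2) x = Complex.exp (r * σ * x) * (A - B) / (2 * (r * σ)) ∧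
        v ((r * σ) ^ 2) x = Complex.exp (r * σ * x) * (A + B) / 2 ∧
        ‖A - (b + r * σ * a)‖ ≤
          M * Real.exp M * (‖b + r * σ * a‖ + ‖b - r * σ * a‖) / ‖(r : ℂ) * σ‖ ∧
        ‖B‖ ≤ Real.exp (-2 * r * x) * ‖b - r * σ * a‖ +
          M * Real.exp M * (‖b + r * σ * a‖ + ‖b - r * σ * a‖) / ‖(r : ℂ) * σ‖ := by
      intro r
      by_cases hr : 1 ≤ r
      · obtain ⟨A, B, h1, h2, h3, h4⟩ := sl_asymp hM0 hM (κ := r * σ)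
          (by rw [Complex.re_ofReal_mul, hσ]; linarith) (hr.trans (hκ r (by linarith)))
          (h ((r * σ) ^ 2))
        rw [hu, hv] at h3 h4
        refine ⟨A x, B x, fun _ => ⟨h1 x, h2 x, h3 x ⟨hx.1.le, hx.2⟩, ?_⟩⟩
        have := h4 x ⟨hx.1.le, hx.2⟩
        rwa [Complex.re_ofReal_mul, hσ, mul_one] at this
      · exact ⟨0, 0, fun h => absurd h hr⟩
    choose A B hAB using hex
    have hbd : ∀ᶠ r : ℝ in atTop,
        M * Real.exp M * (‖b + r * σ * a‖ + ‖b - r * σ * a‖) / ‖(r : ℂ) * σ‖ ≤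
          3 * (M * Real.exp M) * r⁻¹ * ‖b + r * σ * a‖ := by
      filter_upwards [hdom, eventually_ge_atTop 1] with r hd hr
      have h0 := hκ r (by linarith)
      calc _ ≤ M * Real.exp M * (‖b + r * σ * a‖ + 2 * ‖b + r * σ * a‖) / r := by
            gcongr
            exact hd.2
        _ = _ := by field_simp; ring
    have hlim : Tendsto (fun r : ℝ => 3 * (M * Real.exp M) * r⁻¹) atTop (𝓝 0) := by
      simpa using tendsto_inv_atTop_zero.const_mul (3 * (M * Real.exp M))
    have hlim2 : Tendsto (fun r : ℝ => 2 * Real.exp (-2 * r * x)) atTop (𝓝 0) := by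
      have : Tendsto (fun r : ℝ => -2 * r * x) atTop atBot := by
        have := (tendsto_id (α := ℝ) (x := atTop)).const_mul_atTop_of_neg
          (r := -2 * x) (by linarith [hx.1])
        refine this.congr fun r => by simp; ring
      simpa using (Real.tendsto_exp_atBot.comp this).const_mul 2
    refine ⟨fun r => A r / (b + r * σ * a), fun r => B r / (b + r * σ * a), ?_, ?_, ?_⟩
    · rw [tendsto_iff_norm_sub_tendsto_zero]
      refine squeeze_zero' (Eventually.of_forall fun _ => norm_nonneg _) ?_ hlim
      filter_upwards [hdom, hbd, eventually_ge_atTop 1] with r hd hb hr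
      rw [div_sub_one hd.1, norm_div, div_le_iff₀ (norm_pos_iff.2 hd.1)]
      exact (hAB r hr).2.2.1.trans hb
    · rw [tendsto_zero_iff_norm_tendsto_zero]
      refine squeeze_zero' (Eventually.of_forall fun _ => norm_nonneg _) ?_
        (by simpa using hlim2.add hlim)
      filter_upwards [hdom, hbd, eventually_ge_atTop 1] with r hd hb hr
      rw [norm_div, div_le_iff₀ (norm_pos_iff.2 hd.1), add_mul]
      refine (hAB r hr).2.2.2.trans (add_le_add ?_ hb)
      calc _ ≤ Real.exp (-2 * r * x) * (2 * ‖b + r * σ * a‖) := by gcongr; exact hd.2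
        _ = _ := by ring
    · filter_upwards [hdom, eventually_ge_atTop 1] with r hd hr
      have hne : (r : ℂ) * σ ≠ 0 := norm_pos_iff.1 (by linarith [hκ r (by linarith)])
      have hexp : Complex.exp (r * σ * x) * Complex.exp (-(r * σ * x)) = 1 := by
        rw [← Complex.exp_add]; simp
      obtain ⟨h1, h2, -, -⟩ := hAB r hr
      rw [h1, h2, ← sub_div, ← add_div]
      constructor <;> congr 1
      · rw [show 2 * (r * σ) * (Complex.exp (r * σ * x) * (A r - B r) / (2 * (r * σ))) =
          Complex.exp (r * σ * x) * (A r - B r) by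
            rw [mul_div_cancel₀ _ (by simpa using hne)]]
        linear_combination (A r - B r) * hexp
      · linear_combination (A r + B r) * hexp
  obtain ⟨A, B, hA, hB, hAB⟩ := key
  refine ⟨hdom.mono fun _ h => h.1, ?_, ?_⟩
  · simpa using (hA.sub hB).congr' (hAB.mono fun r h => h.1.symm)
  · simpa using (hA.add hB).congr' (hAB.mono fun r h => h.2.symm)

theorem tendsto_inv_ray {σ : ℂ} (hσ : σ.re = 1) :
    Tendsto (fun r : ℝ => ((r : ℂ) * σ)⁻¹) atTop (𝓝 0) := by
  have h : Tendsto (fun r : ℝ => ((r⁻¹ : ℝ) : ℂ) * σ⁻¹) atTop (𝓝 (((0 : ℝ) : ℂ) * σ⁻¹)) :=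
    ((Complex.continuous_ofReal.tendsto _).comp tendsto_inv_atTop_zero).mul_const _
  simpa [mul_inv, mul_comm] using h

/-- Boundary values at `1` for two potentials and the same initial data are asymptotically equal
along rays. -/
theorem sl_ratio {p p' : ℝ → ℝ} (hp : ContinuousOn p (Icc 0 1)) (hp' : ContinuousOn p' (Icc 0 1))
    {u v u' v' : ℂ → ℝ → ℂ} {a b : ℂ}
    (h : ∀ μ, SLSol p μ (u μ) (v μ)) (hu : ∀ μ, u μ 0 = a) (hv : ∀ μ, v μ 0 = b)
    (h' : ∀ μ, SLSol p' μ (u' μ) (v' μ)) (hu' : ∀ μ, u' μ 0 = a) (hv' : ∀ μ, v' μ 0 = b)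
    (hab : a ≠ 0 ∨ b ≠ 0) {σ : ℂ} (hσ : σ.re = 1) {c d : ℂ} (hcd : c ≠ 0 ∨ d ≠ 0) :
    Tendsto (fun r : ℝ => (u' ((r * σ) ^ 2) 1 * c + v' ((r * σ) ^ 2) 1 * d) /
      (u ((r * σ) ^ 2) 1 * c + v ((r * σ) ^ 2) 1 * d)) atTop (𝓝 1) := by
  obtain ⟨hne, h1, h2⟩ := sl_ray hp h hu hv hab hσ (x := 1) (by simp)
  obtain ⟨-, h1', h2'⟩ := sl_ray hp' h' hu' hv' hab hσ (x := 1) (by simp)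
  have hκ : ∀ᶠ r : ℝ in atTop, (r : ℂ) * σ ≠ 0 := by
    filter_upwards [eventually_gt_atTop 0] with r hr h0
    have : ((r : ℂ) * σ).re = r := by rw [Complex.re_ofReal_mul, hσ, mul_one]
    rw [h0] at this
    simp at this
    linarith
  -- a common nonvanishing factor normalising both boundary values
  have key : ∃ (F : ℝ → ℂ) (l : ℂ), l ≠ 0 ∧ (∀ᶠ r in atTop, F r ≠ 0) ∧
      Tendsto (fun r : ℝ => (u ((r * σ) ^ 2) 1 * c + v ((r * σ) ^ 2) 1 * d) * F r) atTop (𝓝 l) ∧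
      Tendsto (fun r : ℝ => (u' ((r * σ) ^ 2) 1 * c + v' ((r * σ) ^ 2) 1 * d) * F r)
        atTop (𝓝 l) := by
    by_cases hd : d = 0
    · have hc : c ≠ 0 := by tauto
      refine ⟨fun r => 2 * (r * σ) * Complex.exp (-(r * σ * (1 : ℝ))) / (b + r * σ * a), c, hc,
        ?_, ?_, ?_⟩
      · filter_upwards [hne, hκ] with r h1 h2
        exact div_ne_zero (mul_ne_zero (mul_ne_zero two_ne_zero h2) (Complex.exp_ne_zero _)) h1
      · have := h1.const_mul c
        rw [mul_one] at this
        refine this.congr fun r => ?_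
        rw [hd]; ring
      · have := h1'.const_mul c
        rw [mul_one] at this
        refine this.congr fun r => ?_
        rw [hd]; ring
    · refine ⟨fun r => 2 * Complex.exp (-(r * σ * (1 : ℝ))) / (b + r * σ * a), d, hd,
        ?_, ?_, ?_⟩
      · filter_upwards [hne] with r h1
        exact div_ne_zero (mul_ne_zero two_ne_zero (Complex.exp_ne_zero _)) h1
      · have := ((h1.const_mul c).mul (tendsto_inv_ray hσ)).add (h2.const_mul d)
        rw [mul_zero, zero_add, mul_one] at this
        refine this.congr' ?_
        filter_upwards [hκ, hne] with r hr hr'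
        generalize (r : ℂ) * σ = κ at hr hr' ⊢
        field_simp
      · have := ((h1'.const_mul c).mul (tendsto_inv_ray hσ)).add (h2'.const_mul d)
        rw [mul_zero, zero_add, mul_one] at this
        refine this.congr' ?_
        filter_upwards [hκ, hne] with r hr hr'
        generalize (r : ℂ) * σ = κ at hr hr' ⊢
        field_simp
  obtain ⟨F, l, hl, hF, t1, t2⟩ := key
  have := t2.div t1 hl
  rw [div_self hl] at this
  refine this.congr' ?_
  filter_upwards [hF] with r hr
  exact mul_div_mul_right _ _ hr

/-! ### Lower bound for the boundary values -/

/-- Quantitative reality and simplicity of the eigenvalues: with `ω` the boundary value at angle `δ`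
and `ω'` the complementary one, `|Im μ| ≤ N ^ 2 ‖ω‖ ‖ω'‖`. Here `Im (ω' conj ω)` is the Lagrange form
`J(1) = Im (v conj u)(1) = Im μ ∫ ‖u‖ ^ 2`, and the integral is at least `1 / N ^ 2` because pairing
`u` with a suitable test function gives `1`. -/
theorem sl_lower {p : ℝ → ℝ} {M : ℝ} (hM0 : 0 ≤ M) (hM : ∀ x ∈ Icc (0 : ℝ) 1, |p x| ≤ M)
    {μ : ℂ} {u v : ℝ → ℂ} (h : SLSol p μ u v) (α δ : ℝ)
    (hu : u 0 = Real.sin α) (hv : v 0 = -Real.cos α) :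
    |μ.im| ≤ ((20 + 4 * M) * (1 + ‖μ‖)) ^ 2 *
      (‖u 1 * Real.cos δ + v 1 * Real.sin δ‖ * ‖v 1 * Real.cos δ - u 1 * Real.sin δ‖) := by
  set ω := u 1 * Real.cos δ + v 1 * Real.sin δ with hω
  set ω' := v 1 * Real.cos δ - u 1 * Real.sin δ with hω'
  set N := (20 + 4 * M) * (1 + ‖μ‖) with hN
  have hN0 : 0 < N := by positivity
  let J : ℝ → ℝ := fun x => (v x * (starRingEnd ℂ) (u x)).im
  have hJd : ∀ x ∈ Icc (0 : ℝ) 1, HasDerivAt J (μ.im * ‖u x‖ ^ 2) x := fun x hx => by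
    have e1 := (h x hx).2.mul (h x hx).1.star
    have e2 := Complex.imCLM.hasFDerivAt.comp_hasDerivAt x e1
    refine HasDerivAt.congr_deriv (f := J) e2 ?_
    rw [← Complex.normSq_eq_norm_sq, Complex.normSq_apply]
    simp [Complex.mul_re, Complex.mul_im]
    ring
  have hJ0 : J 0 = 0 := by simp only [J, hu, hv]; simp
  have hJ1 : J 1 ≤ ‖ω‖ * ‖ω'‖ ∧ -J 1 ≤ ‖ω‖ * ‖ω'‖ := by
    have : J 1 = (ω' * (starRingEnd ℂ) ω).im := by
      simp only [J, hω, hω', Complex.mul_im, Complex.add_re, Complex.add_im, Complex.sub_re,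
        Complex.sub_im, map_add, map_mul, Complex.conj_ofReal, Complex.mul_re, Complex.ofReal_re,
        Complex.ofReal_im, Complex.conj_re, Complex.conj_im]
      have := Real.sin_sq_add_cos_sq δ
      linear_combination (-(v 1).im * (u 1).re + (v 1).re * (u 1).im) * this
    have h2 : |J 1| ≤ ‖ω‖ * ‖ω'‖ := by
      rw [this]
      refine (Complex.abs_im_le_norm _).trans ?_
      rw [norm_mul, Complex.norm_conj, mul_comm]
    exact ⟨(le_abs_self _).trans h2, (neg_le_abs _).trans h2⟩
  -- test function with `χ(1) = χ'(1) = 0` whose Wronskian with `u` is `1` at `0`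
  set a := Real.cos α with ha
  set c := Real.sin α + 2 * Real.cos α with hc
  have ha1 : |a| ≤ 1 := Real.abs_cos_le_one α
  have hc1 : |c| ≤ 3 := by
    have := Real.abs_sin_le_one α
    rw [hc]
    refine (abs_add_le _ _).trans ?_
    rw [abs_mul, abs_two]
    linarith
  let χ : ℝ → ℝ := fun x => (1 - x) ^ 2 * (a + c * x)
  let χ' : ℝ → ℝ := fun x => -2 * (1 - x) * (a + c * x) + (1 - x) ^ 2 * c
  let χ'' : ℝ → ℝ := fun x => 2 * (a + c * x) - 4 * (1 - x) * c
  have hχ : ∀ x, HasDerivAt χ (χ' x) x := fun x => by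
    have e := (((hasDerivAt_id x).const_sub 1).pow 2).mul
      (((hasDerivAt_id x).const_mul c).const_add a)
    exact HasDerivAt.congr_deriv (f := χ) e (by simp [χ']; try ring)
  have hχ' : ∀ x, HasDerivAt χ' (χ'' x) x := fun x => by
    have e := ((((hasDerivAt_id x).const_sub 1).const_mul (-2)).mul
      (((hasDerivAt_id x).const_mul c).const_add a)).add
      ((((hasDerivAt_id x).const_sub 1).pow 2).mul_const c)
    exact HasDerivAt.congr_deriv (f := χ') e (by simp [χ'']; ring)
  let T : ℝ → ℂ := fun x => u x * χ' x - v x * χ x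
  have hTd : ∀ x ∈ Icc (0 : ℝ) 1,
      HasDerivAt T (u x * (χ'' x - (p x + μ) * χ x)) x := fun x hx => by
    refine (((h x hx).1.mul (hχ' x).ofReal_comp).sub
      ((h x hx).2.mul (hχ x).ofReal_comp)).congr_deriv ?_
    ring
  have hT1 : T 1 = 0 := by simp [T, χ, χ']
  have hT0 : T 0 = 1 := by
    simp only [T, χ, χ', hu, hv]
    have := Real.sin_sq_add_cos_sq α
    rw [← ha] at this
    have h2 : ((Real.sin α : ℝ) : ℂ) ^ 2 + (a : ℂ) ^ 2 = 1 := by exact_mod_cast this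
    rw [hc, ← ha]
    push_cast at h2 ⊢
    linear_combination h2
  have hTb : ∀ x ∈ Icc (0 : ℝ) 1, ‖u x * (χ'' x - (p x + μ) * χ x)‖ ≤ N * ‖u x‖ := by
    intro x hx
    have h4 : |a + c * x| ≤ 4 := by
      refine (abs_add_le _ _).trans ?_
      rw [abs_mul, abs_of_nonneg hx.1]
      nlinarith [hx.2, abs_nonneg c]
    have h5 : |χ x| ≤ 4 := by
      simp only [χ]
      rw [abs_mul, abs_pow, abs_of_nonneg (by linarith [hx.2] : 0 ≤ 1 - x)]
      have : (1 - x) ^ 2 ≤ 1 := by nlinarith [hx.1, hx.2]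
      nlinarith [abs_nonneg (a + c * x)]
    have h6 : |χ'' x| ≤ 20 := by
      simp only [χ'']
      refine (abs_sub _ _).trans ?_
      rw [abs_mul, abs_mul, abs_mul, abs_two, abs_of_nonneg (by linarith [hx.2] : 0 ≤ 1 - x),
        abs_of_pos (by norm_num : (0:ℝ) < 4)]
      nlinarith [hx.1, abs_nonneg c]
    rw [norm_mul, mul_comm]
    gcongr
    calc ‖(χ'' x : ℂ) - (p x + μ) * χ x‖ ≤ ‖(χ'' x : ℂ)‖ + (‖(p x : ℂ)‖ + ‖μ‖) * ‖(χ x : ℂ)‖ := by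
          refine (norm_sub_le _ _).trans ?_
          rw [norm_mul]
          gcongr
          exact norm_add_le _ _
      _ ≤ 20 + (M + ‖μ‖) * 4 := by
          simp only [Complex.norm_real, Real.norm_eq_abs]
          gcongr
          exact hM x hx
      _ ≤ N := by rw [hN]; nlinarith [norm_nonneg μ, mul_nonneg hM0 (norm_nonneg μ)]
  -- `s` is the sign of `Im μ`; the function `G` below is monotone by `2 N ‖u‖ ≤ 1 + N ^ 2 ‖u‖ ^ 2`
  have main : ∀ s : ℝ, 0 < s * μ.im → |s| = 1 → |μ.im| ≤ N ^ 2 * (s * J 1) := by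
    intro s hs hs1
    have hss : s * s = 1 := by rw [← abs_mul_abs_self, hs1, one_mul]
    have him : |μ.im| = s * μ.im := by rw [← abs_of_pos hs, abs_mul, hs1, one_mul]
    rw [him]
    let G : ℝ → ℝ := fun x => 2 * (s * μ.im) * (T x).re + (s * μ.im) * x + N ^ 2 * (s * J x)
    have hG : ∀ x ∈ Icc (0 : ℝ) 1, ∃ g', HasDerivAt G g' x ∧ 0 ≤ g' := fun x hx => by
      have e1 := Complex.reCLM.hasFDerivAt.comp_hasDerivAt x (hTd x hx)
      refine ⟨_, ((e1.const_mul (2 * (s * μ.im))).add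
        ((hasDerivAt_id x).const_mul (s * μ.im))).add
        (((hJd x hx).const_mul s).const_mul (N ^ 2)), ?_⟩
      have e2 := (abs_le.1 ((Complex.abs_re_le_norm _).trans (hTb x hx))).1
      have e3 : 0 ≤ (N * ‖u x‖ - 1) ^ 2 := sq_nonneg _
      have e4 : 0 ≤ (s * μ.im) * (2 * ((u x * (χ'' x - (p x + μ) * χ x)).re + N * ‖u x‖) +
        (N * ‖u x‖ - 1) ^ 2) := by
        apply mul_nonneg hs.le; linarith
      simp only [Complex.reCLM_apply, mul_one]
      linarith
    have hmono : MonotoneOn G (Icc 0 1) := by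
      refine monotoneOn_of_deriv_nonneg (convex_Icc 0 1) (fun x hx => ?_) (fun x hx => ?_)
        (fun x hx => ?_)
      · obtain ⟨g', e, -⟩ := hG x hx
        exact e.continuousAt.continuousWithinAt
      · obtain ⟨g', e, -⟩ := hG x (interior_subset hx)
        exact e.differentiableAt.differentiableWithinAt
      · obtain ⟨g', e, e'⟩ := hG x (interior_subset hx)
        rw [e.deriv]; exact e'
    have := hmono (left_mem_Icc.2 zero_le_one) (right_mem_Icc.2 zero_le_one) zero_le_one
    simp only [G, hT0, hT1, hJ0, Complex.one_re, Complex.zero_re] at this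
    linarith
  rcases lt_trichotomy μ.im 0 with h0 | h0 | h0
  · refine (main (-1) (by linarith) (by simp)).trans ?_
    exact mul_le_mul_of_nonneg_left (by linarith [hJ1.2]) (by positivity)
  · rw [h0, abs_zero]; positivity
  · refine (main 1 (by linarith) (by simp)).trans ?_
    exact mul_le_mul_of_nonneg_left (by linarith [hJ1.1]) (by positivity)

/-! ### Spectra and boundary values -/

/-- A real zero of the boundary value at `1` is, up to sign, an eigenvalue; an eigenfunction is the
real part of the solution. -/
theorem isSLEigenvalue_of_zero {p : ℝ → ℝ} (hp : ContinuousOn p (Icc 0 1)) {α δ t : ℝ}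
    {u v : ℝ → ℂ} (h : SLSol p t u v) (hu : u 0 = Real.sin α) (hv : v 0 = -Real.cos α)
    (h1 : u 1 * Real.cos δ + v 1 * Real.sin δ = 0) : IsSLEigenvalue p α δ (-t) := by
  have hur : ∀ x ∈ Icc (0 : ℝ) 1, HasDerivAt (fun x => (u x).re) (v x).re x := fun x hx =>
    Complex.reCLM.hasFDerivAt.comp_hasDerivAt x (h x hx).1
  have hvr : ∀ x ∈ Icc (0 : ℝ) 1,
      HasDerivAt (fun x => (v x).re) ((p x + t) * (u x).re) x := fun x hx => by
    have e := Complex.reCLM.hasFDerivAt.comp_hasDerivAt x (h x hx).2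
    refine HasDerivAt.congr_deriv (f := fun x => (v x).re) e ?_
    simp [Complex.mul_re]
  refine ⟨fun x => (u x).re, fun x => (v x).re, fun x => (p x + t) * (u x).re,
    fun x hx => ⟨hur x hx, hvr x hx⟩, ?_, ?_, fun x _ => by ring, ?_, ?_⟩
  · exact (hp.add continuousOn_const).mul fun x hx =>
      (hur x hx).continuousAt.continuousWithinAt
  · by_contra! hz
    have h0 : (0 : ℝ) ∈ Icc (0 : ℝ) 1 := by simp
    have e1 : Real.sin α = 0 := by have := hz 0 h0; rwa [hu, Complex.ofReal_re] at this
    have e2 : HasDerivWithinAt (fun x => (u x).re) 0 (Icc 0 1) 0 :=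
      (hasDerivWithinAt_const 0 _ (0 : ℝ)).congr hz (hz 0 h0)
    have e3 := (uniqueDiffOn_Icc zero_lt_one 0 h0).eq_deriv _ (hur 0 h0).hasDerivWithinAt e2
    rw [hv, Complex.neg_re, Complex.ofReal_re] at e3
    have := Real.sin_sq_add_cos_sq α
    rw [e1, show Real.cos α = 0 by linarith] at this
    norm_num at this
  · simp only [hu, hv, Complex.neg_re, Complex.ofReal_re]
    ring
  · have := congrArg Complex.re h1
    simpa [Complex.mul_re, -Complex.ofReal_cos, -Complex.ofReal_sin] using this

/-- Every eigenfunction is proportional to the solution satisfying the boundary condition at `0`,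
so the boundary value of the latter at `1` vanishes. -/
theorem zero_of_isSLEigenvalue {p : ℝ → ℝ} (hp : ContinuousOn p (Icc 0 1)) {α δ t : ℝ}
    {u v : ℝ → ℂ} (h : SLSol p t u v) (hu : u 0 = Real.sin α) (hv : v 0 = -Real.cos α)
    (he : IsSLEigenvalue p α δ (-t)) : u 1 * Real.cos δ + v 1 * Real.sin δ = 0 := by
  obtain ⟨y, y', y'', hd, -, ⟨x₀, hx₀, hne⟩, heq, hb0, hb1⟩ := he
  have hy : SLSol p t (fun x => (y x : ℂ)) (fun x => (y' x : ℂ)) := fun x hx => by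
    refine ⟨(hd x hx).1.ofReal_comp, (hd x hx).2.ofReal_comp.congr_deriv ?_⟩
    have := heq x hx
    rw [show y'' x = (p x + t) * y x by linarith]
    push_cast; ring
  have hsc := Real.sin_sq_add_cos_sq α
  set c := y 0 * Real.sin α - y' 0 * Real.cos α with hc
  have c0 : y 0 = c * Real.sin α := by
    rw [hc]; linear_combination Real.cos α * hb0 - y 0 * hsc
  have c1 : y' 0 = -(c * Real.cos α) := by
    rw [hc]; linear_combination Real.sin α * hb0 - y' 0 * hsc
  have key := SLSol.eq_zero hp (hy.comb h 1 (-c))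
    (by simp only [hu, c0]; push_cast; ring) (by simp only [hv, c1]; push_cast; ring)
  have hcne : c ≠ 0 := by
    intro h0
    have := (key x₀ hx₀).1
    simp only [h0] at this
    simp at this
    exact hne this
  obtain ⟨k1, k2⟩ := key 1 (by simp)
  have k3 : ((y 1 * Real.cos δ + y' 1 * Real.sin δ : ℝ) : ℂ) = 0 := by rw [hb1]; simp
  rw [Complex.ofReal_add, Complex.ofReal_mul, Complex.ofReal_mul] at k3
  have : (c : ℂ) * (u 1 * Real.cos δ + v 1 * Real.sin δ) = 0 := by
    linear_combination k3 - Real.cos δ * k1 - Real.sin δ * k2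
  exact (mul_eq_zero.1 this).resolve_left (by exact_mod_cast hcne)

/-- One spectrum determines the boundary value `ω_δ(μ) = u(1) cos δ + u'(1) sin δ` as a function
of `μ`. -/
theorem boundary_eq {Q q : ℝ → ℝ} (hQ : ContinuousOn Q (Icc 0 1)) (hq : ContinuousOn q (Icc 0 1))
    {α δ : ℝ} (hs : ∀ lam : ℝ, IsSLEigenvalue Q α δ lam → IsSLEigenvalue q α δ lam)
    {u v u' v' : ℂ → ℝ → ℂ}
    (h : ∀ μ, SLSol Q μ (u μ) (v μ)) (hu : ∀ μ, u μ 0 = Real.sin α)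
    (hv : ∀ μ, v μ 0 = -Real.cos α)
    (h' : ∀ μ, SLSol q μ (u' μ) (v' μ)) (hu' : ∀ μ, u' μ 0 = Real.sin α)
    (hv' : ∀ μ, v' μ 0 = -Real.cos α)
    (du : Differentiable ℂ (fun μ => u μ 1)) (dv : Differentiable ℂ (fun μ => v μ 1))
    (ou : OrdHalf (fun μ => u μ 1)) (ov : OrdHalf (fun μ => v μ 1))
    (du' : Differentiable ℂ (fun μ => u' μ 1)) (dv' : Differentiable ℂ (fun μ => v' μ 1))
    (ou' : OrdHalf (fun μ => u' μ 1)) (ov' : OrdHalf (fun μ => v' μ 1)) (μ : ℂ) :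
    u' μ 1 * Real.cos δ + v' μ 1 * Real.sin δ = u μ 1 * Real.cos δ + v μ 1 * Real.sin δ := by
  obtain ⟨M, hM⟩ := isCompact_Icc.exists_bound_of_continuousOn hQ
  have hM0 : 0 ≤ M := (norm_nonneg _).trans (hM 0 (by simp))
  have hsc : ∀ θ : ℝ, (Real.sin θ : ℂ) ≠ 0 ∨ (Real.cos θ : ℂ) ≠ 0 := fun θ => by
    by_contra! hh
    have := Real.sin_sq_add_cos_sq θ
    rw [show Real.sin θ = 0 by exact_mod_cast hh.1, show Real.cos θ = 0 by exact_mod_cast hh.2]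
      at this
    norm_num at this
  have hab : (Real.sin α : ℂ) ≠ 0 ∨ -(Real.cos α : ℂ) ≠ 0 := by simpa using hsc α
  have hray : ∀ σ : ℂ, σ.re = 1 → Tendsto (fun r : ℝ =>
      (u' ((r * σ) ^ 2) 1 * Real.cos δ + v' ((r * σ) ^ 2) 1 * Real.sin δ) /
      (u ((r * σ) ^ 2) 1 * Real.cos δ + v ((r * σ) ^ 2) 1 * Real.sin δ)) atTop (𝓝 1) :=
    fun σ hσ => sl_ratio hQ hq h hu hv h' hu' hv' hab hσ (hsc δ).symm
  refine eq_of_quotient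
    (f := fun μ => u' μ 1 * Real.cos δ + v' μ 1 * Real.sin δ)
    (g := fun μ => u μ 1 * Real.cos δ + v μ 1 * Real.sin δ)
    (g₂ := fun μ => v μ 1 * Real.cos δ - u μ 1 * Real.sin δ)
    ((du'.mul_const _).add (dv'.mul_const _)) ((du.mul_const _).add (dv.mul_const _))
    ((dv.mul_const _).sub (du.mul_const _)).continuous
    ((ou'.mul (.const _)).add (ov'.mul (.const _)))
    ((ov.mul (.const _)).sub (ou.mul (.const _))) (20 + 4 * M)
    (fun μ => sl_lower hM0 hM (h μ) α δ (hu μ) (hv μ)) ?_ ?_ ?_ μ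
  · intro t ht
    exact zero_of_isSLEigenvalue hq (h' t) (hu' t) (hv' t)
      (hs _ (isSLEigenvalue_of_zero hQ (h t) (hu t) (hv t) ht))
  · refine (hray (1 + Complex.I) (by simp)).congr fun r => ?_
    have : ((r : ℂ) * (1 + Complex.I)) ^ 2 = 2 * r ^ 2 * Complex.I := by
      linear_combination (r : ℂ) ^ 2 * Complex.I_sq
    rw [this]
  · refine (hray (1 - Complex.I) (by simp)).congr fun r => ?_
    have : ((r : ℂ) * (1 - Complex.I)) ^ 2 = -(2 * r ^ 2 * Complex.I) := by
      linear_combination (r : ℂ) ^ 2 * Complex.I_sq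
    rw [this]

/-! ### Recovering the potential -/

theorem hasDerivAt_eq_zero {f : ℝ → ℂ} {f' : ℂ} {y : ℝ} (hf : HasDerivAt f f' y)
    (hz : ∀ x ∈ Ioo (0 : ℝ) 1, f x = 0) (hy : y ∈ Ioo (0 : ℝ) 1) : f' = 0 :=
  hf.unique ((hasDerivAt_const y (0 : ℂ)).congr_of_eventuallyEq
    (eventually_of_mem (Ioo_mem_nhds hy.1 hy.2) hz))

/-- Constancy of the Wronskian. -/
theorem SLSol.wronskian {p : ℝ → ℝ} {μ : ℂ} {c c' s s' : ℝ → ℂ} (hc : SLSol p μ c c')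
    (hs : SLSol p μ s s') (h0 : c 0 = 1) (h0' : c' 0 = 0) (h1' : s' 0 = 1) :
    ∀ x ∈ Icc (0 : ℝ) 1, c x * s' x - c' x * s x = 1 := by
  intro x hx
  have hd : ∀ y ∈ Icc (0 : ℝ) 1, HasDerivAt (fun y => c y * s' y - c' y * s y) 0 y :=
    fun y hy => (((hc y hy).1.mul (hs y hy).2).sub ((hc y hy).2.mul (hs y hy).1)).congr_deriv
      (by ring)
  have := Convex.norm_image_sub_le_of_norm_hasDerivWithin_le (C := 0)
    (fun y hy => (hd y hy).hasDerivWithinAt) (fun y _ => by simp) (convex_Icc (0 : ℝ) 1)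
    (left_mem_Icc.2 zero_le_one) hx
  rw [zero_mul] at this
  have := sub_eq_zero.1 (norm_le_zero_iff.1 this)
  rw [this, h0, h0', h1']
  ring

/-- A solution expressed through its data at `1` and the fundamental system `c, s` of the reflected
equation. -/
theorem SLSol.eq_of_end {p : ℝ → ℝ} (hp : ContinuousOn (fun x => p (1 - x)) (Icc 0 1)) {μ : ℂ}
    {u v c c' s s' : ℝ → ℂ} (h : SLSol p μ u v)
    (hc : SLSol (fun x => p (1 - x)) μ c c') (hs : SLSol (fun x => p (1 - x)) μ s s')
    (hc0 : c 0 = 1) (hc0' : c' 0 = 0) (hs0 : s 0 = 0) (hs0' : s' 0 = 1) :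
    ∀ y ∈ Icc (0 : ℝ) 1, u (1 - y) = u 1 * c y - v 1 * s y := by
  intro y hy
  have := (SLSol.eq_zero hp (h.reflect.comb (hc.comb hs (u 1) (-v 1)) 1 (-1))
    (by simp [hc0, hs0]) (by simp [hc0', hs0']) y hy).1
  linear_combination this

/-- If the quotients `c / s` and `d / t` of two fundamental systems agree, so do the
potentials. The Wronskian identities turn `(c / s)' = (d / t)'` into `s ^ 2 = t ^ 2`, and two more
differentiations give the claim where `s ≠ 0`. -/
theorem eq_of_local {p p' : ℝ → ℝ} {μ : ℂ} {c c' s s' d d' t t' : ℝ → ℂ}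
    (hc : SLSol p μ c c') (hs : SLSol p μ s s') (hd : SLSol p' μ d d') (ht : SLSol p' μ t t')
    (wc : ∀ x ∈ Icc (0 : ℝ) 1, c x * s' x - c' x * s x = 1)
    (wd : ∀ x ∈ Icc (0 : ℝ) 1, d x * t' x - d' x * t x = 1)
    (hD : ∀ x ∈ Ioo (0 : ℝ) 1, c x * t x - d x * s x = 0) {y : ℝ} (hy : y ∈ Ioo (0 : ℝ) 1)
    (hne : s y ≠ 0) : p y = p' y := by
  have e1 : ∀ x ∈ Ioo (0 : ℝ) 1, s x ^ 2 - t x ^ 2 = 0 := fun x hx => by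
    have hx' := Ioo_subset_Icc_self hx
    have h1 := hasDerivAt_eq_zero
      (((hc x hx').1.mul (ht x hx').1).sub ((hd x hx').1.mul (hs x hx').1)) hD hx
    have h2 := hD x hx
    linear_combination (s x * t x) * h1 + t x ^ 2 * wc x hx' - s x ^ 2 * wd x hx' +
      (-(t x * s' x) - s x * t' x) * h2
  have e2 : ∀ x ∈ Ioo (0 : ℝ) 1, s x * s' x - t x * t' x = 0 := fun x hx => by
    have hx' := Ioo_subset_Icc_self hx
    have h1 := hasDerivAt_eq_zero (((hs x hx').1.pow 2).sub ((ht x hx').1.pow 2)) e1 hx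
    simp only [Nat.cast_ofNat, Nat.add_one_sub_one, pow_one] at h1
    linear_combination h1 / 2
  have hy' := Ioo_subset_Icc_self hy
  have e3 := hasDerivAt_eq_zero
    (((hs y hy').1.mul (hs y hy').2).sub ((ht y hy').1.mul (ht y hy').2)) e2 hy
  have e4 := e1 y hy
  have e5 := e2 y hy
  have hs2 : s y ^ 2 ≠ 0 := pow_ne_zero 2 hne
  have e6 : s' y ^ 2 - t' y ^ 2 = 0 := by
    refine (mul_eq_zero.1 (?_ : s y ^ 2 * _ = 0)).resolve_left hs2
    linear_combination (s y * s' y + t y * t' y) * e5 - t' y ^ 2 * e4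
  have e7 : s y ^ 2 * ((p y : ℂ) - p' y) = 0 := by
    linear_combination e3 - e6 - ((p' y : ℂ) + μ) * e4
  have := sub_eq_zero.1 ((mul_eq_zero.1 e7).resolve_left hs2)
  exact_mod_cast this

/-- Equal Cauchy data at both endpoints for all `μ` force equal potentials. With `c, s` and `d, t`
the fundamental systems normalised at the endpoint `1`, the function `μ ↦ c t - d s` is entire of
order at most `1/2` and tends to `0` along the imaginary half-axes, hence vanishes. -/
theorem potential_eq {Q q : ℝ → ℝ} (hQ : ContinuousOn Q (Icc 0 1)) (hq : ContinuousOn q (Icc 0 1))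
    {a b : ℂ} (hab : a ≠ 0 ∨ b ≠ 0) {u v u' v' : ℂ → ℝ → ℂ}
    (h : ∀ μ, SLSol Q μ (u μ) (v μ)) (hu : ∀ μ, u μ 0 = a) (hv : ∀ μ, v μ 0 = b)
    (h' : ∀ μ, SLSol q μ (u' μ) (v' μ)) (hu' : ∀ μ, u' μ 0 = a) (hv' : ∀ μ, v' μ 0 = b)
    (hue : ∀ μ, u' μ 1 = u μ 1) (hve : ∀ μ, v' μ 1 = v μ 1) :
    ∀ x ∈ Ioo (0 : ℝ) 1, Q x = q x := by
  have hmap : MapsTo (fun x : ℝ => 1 - x) (Icc 0 1) (Icc 0 1) := fun x hx =>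
    ⟨by linarith [hx.2], by linarith [hx.1]⟩
  have hQr : ContinuousOn (fun x => Q (1 - x)) (Icc 0 1) := hQ.comp (by fun_prop) hmap
  have hqr : ContinuousOn (fun x => q (1 - x)) (Icc 0 1) := hq.comp (by fun_prop) hmap
  obtain ⟨c, c', hc, hc0, hc0', dc, -, oc, -⟩ := exists_family _ hQr 1 0
  obtain ⟨s, s', hs, hs0, hs0', ds, -, os, -⟩ := exists_family _ hQr 0 1
  obtain ⟨d, d', hd, hd0, hd0', dd, -, od, -⟩ := exists_family _ hqr 1 0
  obtain ⟨t, t', ht, ht0, ht0', dt, -, ot, -⟩ := exists_family _ hqr 0 1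
  have hray : ∀ σ : ℂ, σ.re = 1 → ∀ y ∈ Ioo (0 : ℝ) 1, Tendsto (fun r : ℝ =>
      c ((r * σ) ^ 2) y * t ((r * σ) ^ 2) y - d ((r * σ) ^ 2) y * s ((r * σ) ^ 2) y)
      atTop (𝓝 0) := by
    intro σ hσ y hy
    have hx : 1 - y ∈ Ioc (0 : ℝ) 1 := ⟨by linarith [hy.2], by linarith [hy.1]⟩
    have hy1 : y ∈ Ioc (0 : ℝ) 1 := ⟨hy.1, hy.2.le⟩
    obtain ⟨hne, a1, -⟩ := sl_ray hQ h hu hv hab hσ hx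
    obtain ⟨-, a2, -⟩ := sl_ray hq h' hu' hv' hab hσ hx
    obtain ⟨-, a3, -⟩ := sl_ray hQ h hu hv hab hσ (x := 1) (by simp)
    obtain ⟨-, b1, -⟩ := sl_ray hQr hs hs0 hs0' (Or.inr one_ne_zero) hσ hy1
    obtain ⟨-, b2, -⟩ := sl_ray hqr ht ht0 ht0' (Or.inr one_ne_zero) hσ hy1
    have lim := ((((a1.mul b2).sub (a2.mul b1)).div a3 one_ne_zero).mul
      (tendsto_inv_ray hσ)).mul_const (2⁻¹ : ℂ)
    rw [mul_zero, zero_mul] at lim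
    -- `(c t - d s) u(1) = u(x) t - u'(x) s` for `x = 1 - y`, with `u, u'` the two solutions
    refine lim.congr' ?_
    filter_upwards [hne, a3.eventually_ne one_ne_zero] with r h1 h2
    have r1 := (h ((r * σ) ^ 2)).eq_of_end hQr (hc _) (hs _) (hc0 _) (hc0' _) (hs0 _) (hs0' _) y
      ⟨hy.1.le, hy.2.le⟩
    have r2 := (h' ((r * σ) ^ 2)).eq_of_end hqr (hd _) (ht _) (hd0 _) (hd0' _) (ht0 _) (ht0' _) y
      ⟨hy.1.le, hy.2.le⟩
    rw [hue, hve] at r2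
    have hE : Complex.exp (-(r * σ * ((1 - y : ℝ) : ℂ))) * Complex.exp (-(r * σ * y)) =
        Complex.exp (-(r * σ * ((1 : ℝ) : ℂ))) := by
      rw [← Complex.exp_add]; congr 1; push_cast; ring
    simp only [Pi.div_apply]
    rw [r1, r2]
    generalize (r : ℂ) * σ = κ at *
    have hκ : κ ≠ 0 := by rintro rfl; simp at h2
    have hu1 : u (κ ^ 2) 1 ≠ 0 := by intro h0; rw [h0] at h2; simp at h2
    rw [← hE]
    have n1 := Complex.exp_ne_zero (-(κ * ((1 - y : ℝ) : ℂ)))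
    have n2 := Complex.exp_ne_zero (-(κ * y))
    generalize Complex.exp (-(κ * ((1 - y : ℝ) : ℂ))) = E1 at *
    generalize Complex.exp (-(κ * y)) = E2 at *
    simp only [mul_zero, add_zero, div_one]
    field_simp
    ring
  have hD : ∀ y ∈ Ioo (0 : ℝ) 1, ∀ μ, c μ y * t μ y - d μ y * s μ y = 0 := by
    intro y hy
    have hy' := Ioo_subset_Icc_self hy
    refine eq_of_ordHalf_of_tendsto (H := fun μ => c μ y * t μ y - d μ y * s μ y)
      (((dc y hy').mul (dt y hy')).sub ((dd y hy').mul (ds y hy')))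
      (((oc y hy').mul (ot y hy')).sub ((od y hy').mul (os y hy'))) ?_ ?_
    · refine (hray (1 + Complex.I) (by simp) y hy).congr fun r => ?_
      have : ((r : ℂ) * (1 + Complex.I)) ^ 2 = 2 * r ^ 2 * Complex.I := by
        linear_combination (r : ℂ) ^ 2 * Complex.I_sq
      rw [this]
    · refine (hray (1 - Complex.I) (by simp) y hy).congr fun r => ?_
      have : ((r : ℂ) * (1 - Complex.I)) ^ 2 = -(2 * r ^ 2 * Complex.I) := by
        linear_combination (r : ℂ) ^ 2 * Complex.I_sq
      rw [this]
  intro x hx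
  have hy : 1 - x ∈ Ioo (0 : ℝ) 1 := ⟨by linarith [hx.2], by linarith [hx.1]⟩
  -- a spectral parameter at which the sine-type solution does not vanish at `1 - x`
  obtain ⟨μ, hμ⟩ : ∃ μ, s μ (1 - x) ≠ 0 := by
    obtain ⟨-, b1, -⟩ := sl_ray hQr hs hs0 hs0' (Or.inr one_ne_zero) (σ := 1) (by simp)
      (x := 1 - x) ⟨hy.1, hy.2.le⟩
    obtain ⟨r, hr⟩ := (b1.eventually_ne one_ne_zero).exists
    exact ⟨_, fun h0 => hr (by rw [h0]; simp)⟩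
  have := eq_of_local (hc μ) (hs μ) (hd μ) (ht μ)
    ((hc μ).wronskian (hs μ) (hc0 μ) (hc0' μ) (hs0' μ))
    ((hd μ).wronskian (ht μ) (hd0 μ) (hd0' μ) (ht0' μ)) (fun y hy => hD y hy μ) hy hμ
  simpa using this

/-- Borg–Levinson uniqueness theorem (continuous-potential version): if the two
boundary value problems `(·; α, β)` and `(·; α, γ)`, with `sin(β − γ) ≠ 0`, have the
same eigenvalues for the potentials `Q` and `q`, then `Q = q` on `[0,1]`. -/
theorem borg_levinson_uniqueness
    (Q q : ℝ → ℝ)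
    (hQ : ContinuousOn Q (Set.Icc (0:ℝ) 1)) (hq : ContinuousOn q (Set.Icc (0:ℝ) 1))
    (α β γ : ℝ) (hβγ : Real.sin (β - γ) ≠ 0)
    (hspec1 : ∀ lam : ℝ, IsSLEigenvalue Q α β lam ↔ IsSLEigenvalue q α β lam)
    (hspec2 : ∀ lam : ℝ, IsSLEigenvalue Q α γ lam ↔ IsSLEigenvalue q α γ lam) :
    ∀ x ∈ Set.Icc (0:ℝ) 1, Q x = q x := by
  obtain ⟨u, v, h, hu, hv, du, dv, ou, ov⟩ :=
    exists_family Q hQ (Real.sin α) (-Real.cos α)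
  obtain ⟨u', v', h', hu', hv', du', dv', ou', ov'⟩ :=
    exists_family q hq (Real.sin α) (-Real.cos α)
  have h1 : (1 : ℝ) ∈ Icc (0 : ℝ) 1 := by simp
  have eβ := boundary_eq hQ hq (fun lam => (hspec1 lam).1) h hu hv h' hu' hv' (du 1 h1) (dv 1 h1)
    (ou 1 h1) (ov 1 h1) (du' 1 h1) (dv' 1 h1) (ou' 1 h1) (ov' 1 h1)
  have eγ := boundary_eq hQ hq (fun lam => (hspec2 lam).1) h hu hv h' hu' hv' (du 1 h1) (dv 1 h1)
    (ou 1 h1) (ov 1 h1) (du' 1 h1) (dv' 1 h1) (ou' 1 h1) (ov' 1 h1)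
  have hdet : (Real.sin β : ℂ) * Real.cos γ - Real.cos β * Real.sin γ ≠ 0 := by
    rw [Real.sin_sub] at hβγ
    exact_mod_cast hβγ
  have hue : ∀ μ, u' μ 1 = u μ 1 := fun μ => by
    refine sub_eq_zero.1 ((mul_eq_zero.1 (?_ : _ * (u' μ 1 - u μ 1) = 0)).resolve_left hdet)
    linear_combination (Real.sin β : ℂ) * eγ μ - (Real.sin γ : ℂ) * eβ μ
  have hve : ∀ μ, v' μ 1 = v μ 1 := fun μ => by
    refine sub_eq_zero.1 ((mul_eq_zero.1 (?_ : _ * (v' μ 1 - v μ 1) = 0)).resolve_left hdet)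
    linear_combination (Real.cos γ : ℂ) * eβ μ - (Real.cos β : ℂ) * eγ μ
  have hab : (Real.sin α : ℂ) ≠ 0 ∨ -(Real.cos α : ℂ) ≠ 0 := by
    by_contra! hh
    have := Real.sin_sq_add_cos_sq α
    rw [show Real.sin α = 0 by exact_mod_cast hh.1,
      show Real.cos α = 0 by exact_mod_cast neg_eq_zero.1 hh.2] at this
    norm_num at this
  have hopen := potential_eq hQ hq hab h hu hv h' hu' hv' hue hve
  have hcl : Icc (0 : ℝ) 1 ⊆ closure (Ioo 0 1) := by rw [closure_Ioo zero_ne_one]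
  exact EqOn.of_subset_closure (s := Ioo 0 1) hopen hQ hq Ioo_subset_Icc_self hcl
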